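/- Let σ: ℤ → ℂ satisfy the classical Marcinkiewicz condition sup_{ξ∈ℤ}|σ(ξ)| + sup_{j∈ℕ₀} Σ_{2^{j−1} ≤ |ξ| < 2^j} |σ(ξ+1) − σ(ξ)| < ∞. Then the Fourier multiplier Af(x) := Σ_{ξ∈ℤ} e^{2πixξ} σ(ξ) f̂(ξ) extends to a bounded operator from F^r_{p,q}(𝕋) to F^r_{p,q}(𝕋) for all 1 < p, q < ∞ and all r ∈ ℝ, and for p = 1 it extends to a bounded operator from F^r_{1,q}(𝕋) to weak-F^r_{1,q}(𝕋). -/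

import Mathlib

open MeasureTheory ENNReal Real
open scoped NNReal

noncomputable section

/-- The Littlewood–Paley profiles: `ψ_0(λ) = Σ_{j ≤ 0} η(2^{-j} λ)` and
`ψ_ℓ(λ) = η(2^{-ℓ} λ)` for `ℓ ≥ 1`. -/
def lpProfile (η : ℝ → ℝ) (ℓ : ℕ) (lam : ℝ) : ℝ :=
  if ℓ = 0 then ∑' j : {j : ℤ // j ≤ 0}, η ((2 : ℝ) ^ (-(j : ℤ)) * lam)
  else η ((2 : ℝ) ^ (-(ℓ : ℤ)) * lam)

/-- `η ∈ C_0^∞(ℝ⁺, [0,1])`, `η ≠ 0`, `supp η ⊆ [1/2, 2]`,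
and `Σ_{j∈ℤ} η(2^{-j}λ) = 1` for every `λ > 0`. -/
structure IsAdmissibleEta (η : ℝ → ℝ) : Prop where
  smooth : ContDiff ℝ (⊤ : ℕ∞) η
  mem_Icc : ∀ x, η x ∈ Set.Icc (0 : ℝ) 1
  ne_zero : η ≠ 0
  support_subset : Function.support η ⊆ Set.Icc (1/2 : ℝ) 2
  hasSum_one : ∀ lam : ℝ, 0 < lam → HasSum (fun j : ℤ => η ((2 : ℝ) ^ (-j) * lam)) 1

/-- The eigenvalue `⟨ξ⟩ = (1 + 4π²ξ²)^{1/2}` of `B = (1+𝓛)^{1/2}` on the exponential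
`e^{2πixξ}` on the torus `𝕋 = ℝ/ℤ`. -/
def torusEig (ξ : ℤ) : ℝ := Real.sqrt (1 + 4 * π ^ 2 * (ξ : ℝ) ^ 2)

/-- The Fourier multiplier `A f(x) = Σ_{ξ ∈ ℤ} e^{2πixξ} σ(ξ) f̂(ξ)` on the torus. -/
def torusMul (σ : ℤ → ℂ) (f : UnitAddCircle → ℂ) (x : UnitAddCircle) : ℂ :=
  ∑' ξ : ℤ, σ ξ * fourierCoeff f ξ * fourier ξ x

/-- The Littlewood–Paley projection `ψ_ℓ(B)` on the torus, `B = (1+𝓛)^{1/2}`: the Fourier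
multiplier with symbol `ψ_ℓ(⟨ξ⟩)`. -/
def torusLP (η : ℝ → ℝ) (ℓ : ℕ) (f : UnitAddCircle → ℂ) : UnitAddCircle → ℂ :=
  torusMul (fun ξ => (lpProfile η ℓ (torusEig ξ) : ℂ)) f

/-- The pointwise quantity `(Σ_{ℓ≥0} 2^{ℓ r q} |ψ_ℓ(B) f(x)|^q)^{1/q}` on the torus. -/
def torusTlFn (η : ℝ → ℝ) (r q : ℝ) (f : UnitAddCircle → ℂ) (x : UnitAddCircle) : ℝ≥0∞ :=
  (∑' ℓ : ℕ, (ENNReal.ofReal ((2 : ℝ) ^ ((ℓ : ℝ) * r)) * (‖torusLP η ℓ f x‖₊ : ℝ≥0∞)) ^ q)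
    ^ (1/q)

/-- The Triebel–Lizorkin norm `‖f‖_{F^r_{p,q}(𝕋)}`. -/
def torusTlNorm (η : ℝ → ℝ) (r p q : ℝ) (f : UnitAddCircle → ℂ) : ℝ≥0∞ :=
  (∫⁻ x, (torusTlFn η r q f x) ^ p ∂AddCircle.haarAddCircle) ^ (1/p)

/-- The weak Triebel–Lizorkin quasi-norm `‖f‖_{weak-F^r_{1,q}(𝕋)}`. -/
def torusWeakTlNorm (η : ℝ → ℝ) (r q : ℝ) (f : UnitAddCircle → ℂ) : ℝ≥0∞ :=
  ⨆ t : ℝ≥0, (t : ℝ≥0∞) *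
    AddCircle.haarAddCircle {x | (t : ℝ≥0∞) < torusTlFn η r q f x}

/-- The classical Marcinkiewicz condition on `σ : ℤ → ℂ`, with bound `M`:
`sup_{ξ∈ℤ} |σ(ξ)| ≤ M` and `Σ_{2^{j-1} ≤ |ξ| < 2^j} |σ(ξ+1) − σ(ξ)| ≤ M` for all `j ∈ ℕ₀`. -/
def MarcinkiewiczCondition (σ : ℤ → ℂ) (M : ℝ) : Prop :=
  (∀ ξ : ℤ, ‖σ ξ‖ ≤ M) ∧
  ∀ j : ℕ,
    ∑ ξ ∈ (Finset.Icc (-(2 ^ j : ℤ)) (2 ^ j)).filter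
        (fun ξ : ℤ => (2 : ℤ) ^ (j - 1) ≤ |ξ| ∧ |ξ| < (2 : ℤ) ^ j),
      ‖σ (ξ + 1) - σ ξ‖ ≤ M

/-! On the `N`-th roots of unity, the Hilbert transform sampled at half-integer shifts is an `ℓ²`
isometry whose kernel satisfies Hörmander's condition, so it is of weak type `(1, 1)` for functions
with values in `ℓ^q` as soon as it is bounded on `L^q`; interpolation and duality then give all
exponents, uniformly in `N`. Averaging over the translates of the grid transfers these bounds to the
multiplier with symbol `sign ξ` acting on vectors of trigonometric polynomials. A symbol supported
in a bounded interval is half the sum of its jumps times translated signs, so a family of symbols of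
variation at most `V` is controlled by `V` times the signs. The Marcinkiewicz condition bounds the
variation of `σ` cut off to the frequencies `2^{ℓ-4} ≤ |ξ| < 2^ℓ`, which are the only ones seen by
`ψ_ℓ(B)`. -/

namespace MarcinkiewiczTorus

open scoped FourierTransform Finset

lemma fourierChar_intCast (n : ℤ) : (𝐞 (n : ℝ) : ℂ) = 1 := by
  rw [Real.fourierChar_apply, Complex.exp_eq_one_iff]
  exact ⟨n, by push_cast; ring⟩

lemma fourierChar_add (s t : ℝ) : (𝐞 (s + t) : ℂ) = 𝐞 s * 𝐞 t := by
  rw [AddChar.map_add_eq_mul, Circle.coe_mul]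

lemma fourierChar_natCast_mul (n : ℕ) (t : ℝ) : (𝐞 (n * t) : ℂ) = 𝐞 t ^ n := by
  rw [← nsmul_eq_mul, AddChar.map_nsmul_eq_pow, Circle.coe_pow]

lemma conj_fourierChar (t : ℝ) : (starRingEnd ℂ) (𝐞 t : ℂ) = 𝐞 (-t) := by
  rw [AddChar.map_neg_eq_inv, Circle.coe_inv_eq_conj]

lemma fourierChar_intCast_add_half (d : ℤ) : (𝐞 ((d : ℝ) + 1 / 2) : ℂ) = -1 := by
  rw [fourierChar_add, fourierChar_intCast, one_mul, Real.fourierChar_apply,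
    ← Complex.exp_pi_mul_I]
  push_cast
  ring_nf

lemma norm_one_sub_fourierChar (t : ℝ) : ‖1 - (𝐞 t : ℂ)‖ = 2 * |Real.sin (π * t)| := by
  rw [norm_sub_rev, Real.fourierChar_apply, mul_comm _ Complex.I,
    Complex.norm_exp_I_mul_ofReal_sub_one, mul_assoc 2 π t, mul_div_cancel_left₀ _ two_ne_zero]
  simp

lemma norm_one_sub_fourierChar_le (t : ℝ) : ‖1 - (𝐞 t : ℂ)‖ ≤ 2 * π * |t| := by
  have := Real.abs_sin_le_abs (x := π * t)
  rw [abs_mul, abs_of_pos Real.pi_pos] at this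
  rw [norm_one_sub_fourierChar]
  linarith

lemma four_mul_min_le_norm_one_sub_fourierChar {t : ℝ} (h0 : 0 ≤ t) (h1 : t ≤ 1) :
    4 * min t (1 - t) ≤ ‖1 - (𝐞 t : ℂ)‖ := by
  have jordan : ∀ s : ℝ, 0 ≤ s → s ≤ 1 / 2 → 2 * s ≤ Real.sin (π * s) := fun s hs hs' => by
    have := Real.mul_le_sin (x := π * s) (by positivity) (by nlinarith [Real.pi_pos])
    rwa [← mul_assoc, div_mul_cancel₀ _ Real.pi_ne_zero] at this
  rw [norm_one_sub_fourierChar]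
  have habs := le_abs_self (Real.sin (π * t))
  rcases le_total t (1 / 2) with h | h
  · linarith [min_le_left t (1 - t), jordan t h0 h]
  · have := jordan (1 - t) (by linarith) (by linarith)
    rw [mul_one_sub π t, Real.sin_pi_sub] at this
    linarith [min_le_right t (1 - t)]

lemma one_sub_fourierChar_mul_sum (N : ℕ) (t : ℝ) :
    (1 - (𝐞 t : ℂ)) * ∑ z ∈ Finset.range N, (𝐞 (z * t) : ℂ) = 1 - 𝐞 (N * t) := by
  simp_rw [fourierChar_natCast_mul]
  exact mul_neg_geom_sum _ N

/-- The kernel of the half-shifted discrete Hilbert transform on `ℤ/N`: the inverse discrete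
Fourier transform of `z ↦ e^{πiz/N}` on `{0, …, N-1}`. Convolution with it evaluates at the
shifted nodes `(i + 1/2)/N` the trigonometric interpolant of data given at the nodes `k/N`. -/
def hilbertKernel (N : ℕ) (d : ℤ) : ℂ :=
  (N : ℂ)⁻¹ * ∑ z ∈ Finset.range N, (𝐞 (z * (((d : ℝ) + 1 / 2) / N)) : ℂ)

section HilbertKernel

variable {N : ℕ}

lemma one_sub_fourierChar_mul_hilbertKernel (hN : N ≠ 0) (d : ℤ) :
    (1 - (𝐞 (((d : ℝ) + 1 / 2) / N) : ℂ)) * hilbertKernel N d = 2 / N := by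
  have h := one_sub_fourierChar_mul_sum N (((d : ℝ) + 1 / 2) / N)
  rw [mul_div_cancel₀ _ (Nat.cast_ne_zero.2 hN), fourierChar_intCast_add_half] at h
  rw [hilbertKernel, mul_left_comm, h]
  ring

lemma hilbertKernel_periodic (N : ℕ) : Function.Periodic (hilbertKernel N) (N : ℤ) := by
  intro d
  rcases eq_or_ne N 0 with rfl | hN
  · simp [hilbertKernel]
  · refine congrArg (_ * ·) (Finset.sum_congr rfl fun z _ => ?_)
    rw [show (z : ℝ) * (((d + N : ℤ) + 1 / 2) / N) = z * (((d : ℝ) + 1 / 2) / N) + (z : ℤ) by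
      push_cast; field_simp; ring, fourierChar_add, fourierChar_intCast, mul_one]

lemma hilbertKernel_sub (hN : N ≠ 0) {d e : ℤ}
    (hd : (1 - (𝐞 (((d : ℝ) + 1 / 2) / N) : ℂ)) ≠ 0)
    (he : (1 - (𝐞 (((e : ℝ) + 1 / 2) / N) : ℂ)) ≠ 0) :
    hilbertKernel N d - hilbertKernel N e =
      2 / N * (𝐞 (((d : ℝ) + 1 / 2) / N) - 𝐞 (((e : ℝ) + 1 / 2) / N)) /
        ((1 - 𝐞 (((d : ℝ) + 1 / 2) / N)) * (1 - 𝐞 (((e : ℝ) + 1 / 2) / N))) := by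
  rw [eq_div_iff (mul_ne_zero hd he)]
  linear_combination (1 - (𝐞 (((e : ℝ) + 1 / 2) / N) : ℂ)) *
    one_sub_fourierChar_mul_hilbertKernel hN d - (1 - (𝐞 (((d : ℝ) + 1 / 2) / N) : ℂ)) *
    one_sub_fourierChar_mul_hilbertKernel hN e

lemma norm_fourierChar_sub (s t : ℝ) : ‖(𝐞 s : ℂ) - 𝐞 t‖ ≤ 2 * π * |s - t| := by
  have : (𝐞 s : ℂ) - 𝐞 t = -(𝐞 t * (1 - 𝐞 (s - t))) := by
    rw [mul_sub, ← fourierChar_add, add_sub_cancel]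
    ring
  rw [this, norm_neg, norm_mul, Circle.norm_coe, one_mul]
  exact norm_one_sub_fourierChar_le _

lemma min_le_norm_one_sub_fourierChar_div (hN : N ≠ 0) {d θ : ℝ} (hd : d / 2 ≤ θ)
    (hNd : (N - d) / 2 ≤ N - θ) (hd0 : 0 ≤ d) (hdN : d ≤ N) :
    2 / N * min d (N - d) ≤ ‖1 - (𝐞 (θ / N) : ℂ)‖ := by
  have hN' : (0 : ℝ) < N := by positivity
  refine le_trans ?_ (four_mul_min_le_norm_one_sub_fourierChar (div_nonneg (by linarith) hN'.le)
    ((div_le_one hN').2 (by linarith)))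
  rw [show 2 / (N : ℝ) * min d (N - d) = 4 * (min d (N - d) / 2 / N) by ring,
    one_sub_div hN'.ne']
  gcongr
  refine le_min ?_ ?_ <;> gcongr
  · linarith [min_le_left d (N - d)]
  · linarith [min_le_right d (N - d)]

lemma norm_hilbertKernel_sub_le {d s L : ℕ} (hs : s < L) (h1 : 2 * L ≤ d) (h2 : d + L < N) :
    ‖hilbertKernel N (d - s) - hilbertKernel N d‖ ≤
      π * L * (((d : ℝ) ^ 2)⁻¹ + (((N - d : ℕ) : ℝ) ^ 2)⁻¹) := by
  have hN : N ≠ 0 := by omega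
  have : (0 : ℝ) < N := by positivity
  rw [Nat.cast_sub (by omega)]
  have hs' : (s : ℝ) + 1 ≤ L := by exact_mod_cast hs
  have h1' : (2 : ℝ) * L ≤ d := by exact_mod_cast h1
  have h2' : (d : ℝ) + L + 1 ≤ N := by exact_mod_cast h2
  have : (0 : ℝ) ≤ s := s.cast_nonneg
  have low : ∀ e : ℤ, (d : ℝ) - s ≤ e → (e : ℝ) ≤ d →
      2 / N * min (d : ℝ) (N - d) ≤ ‖1 - (𝐞 (((e : ℝ) + 1 / 2) / N) : ℂ)‖ := fun e he he' =>
    min_le_norm_one_sub_fourierChar_div hN (by linarith) (by linarith) (by linarith)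
      (by linarith)
  have hlow₁ := low (d - s) (by simp) (by simp)
  have hlow₂ := low d (by simp) (by simp)
  have hmin : 0 < min (d : ℝ) (N - d) := lt_min (by linarith) (by linarith)
  have hpos : 0 < 2 / N * min (d : ℝ) (N - d) := by positivity
  have hnum : ‖(𝐞 ((((d - s : ℤ) : ℝ) + 1 / 2) / N) : ℂ) - 𝐞 ((((d : ℤ) : ℝ) + 1 / 2) / N)‖
      ≤ 2 * π * (L / N) := by
    refine (norm_fourierChar_sub _ _).trans ?_
    rw [← sub_div, abs_div, Nat.abs_cast]
    push_cast
    rw [show (d : ℝ) - s + 1 / 2 - (d + 1 / 2) = -s by ring, abs_neg, Nat.abs_cast]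
    gcongr
  rw [hilbertKernel_sub hN (norm_pos_iff.1 (hpos.trans_le hlow₁))
    (norm_pos_iff.1 (hpos.trans_le hlow₂)), norm_div, norm_mul, norm_mul,
    show ‖(2 : ℂ) / N‖ = 2 / N by simp]
  calc _ ≤ 2 / (N : ℝ) * (2 * π * (L / N)) /
        ((2 / N * min (d : ℝ) (N - d)) * (2 / N * min (d : ℝ) (N - d))) := by gcongr
    _ = π * L * (min (d : ℝ) (N - d) ^ 2)⁻¹ := by field_simp
    _ ≤ π * L * (((d : ℝ) ^ 2)⁻¹ + (((N : ℝ) - d) ^ 2)⁻¹) := by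
      gcongr
      rcases min_choice (d : ℝ) (N - d) with h | h <;> rw [h]
      · exact le_add_of_nonneg_right (by positivity)
      · exact le_add_of_nonneg_left (by positivity)

/-- The offset of `i` from `c` on the cycle `ℤ/N`, for `i < N` and `c ≤ N`. -/
def cyclicOffset (N c i : ℕ) : ℕ := if c ≤ i then i - c else i + N - c

/-- The points of `{0, …, N-1}` at cyclic distance at least comparable to `L` from the block
`[c, c + L)`. -/
def farPoints (N c L : ℕ) : Finset ℕ :=
  {i ∈ Finset.range N | 2 * L ≤ cyclicOffset N c i ∧ cyclicOffset N c i + L < N}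

/-- The Hörmander regularity condition in the second variable, for kernels on `{0, …, N-1}`. -/
def IsHormander (N : ℕ) (K : ℕ → ℕ → ℂ) (B : ℝ) : Prop :=
  ∀ c k L : ℕ, c ≤ k → k < c + L → c + L ≤ N → ∑ i ∈ farPoints N c L, ‖K i k - K i c‖ ≤ B

lemma hilbertKernel_cyclicOffset {c i : ℕ} (hc : c ≤ N) (s : ℤ) :
    hilbertKernel N (cyclicOffset N c i - s) = hilbertKernel N (i - c - s) := by
  unfold cyclicOffset
  split_ifs with h
  · rw [Nat.cast_sub h]
  · rw [Nat.cast_sub (by omega), ← hilbertKernel_periodic N (i - c - s)]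
    push_cast
    ring_nf

lemma cyclicOffset_lt {c i : ℕ} (hc : c ≤ N) (hi : i < N) : cyclicOffset N c i < N := by
  unfold cyclicOffset
  split_ifs <;> omega

lemma cyclicOffset_injOn {c : ℕ} (hc : c ≤ N) :
    Set.InjOn (cyclicOffset N c) (Finset.range N : Set ℕ) := by
  intro i hi j hj hij
  rw [Finset.mem_coe, Finset.mem_range] at hi hj
  unfold cyclicOffset at hij
  split_ifs at hij <;> omega

lemma sum_farPoints_comp_cyclicOffset_le {c L : ℕ} (hc : c ≤ N) {g : ℕ → ℝ}
    (hg : ∀ d, 0 ≤ g d) :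
    ∑ i ∈ farPoints N c L, g (cyclicOffset N c i) ≤ ∑ d ∈ Finset.Ico (2 * L) (N - L), g d := by
  have hinj : Set.InjOn (cyclicOffset N c) (farPoints N c L) :=
    (cyclicOffset_injOn hc).mono (by exact_mod_cast Finset.filter_subset _ _)
  rw [← Finset.sum_image (f := g) hinj]
  refine Finset.sum_le_sum_of_subset_of_nonneg ?_ fun d _ _ => hg d
  simp only [farPoints, Finset.subset_iff, Finset.mem_image, Finset.mem_filter, Finset.mem_Ico]
  rintro d ⟨i, hi, rfl⟩
  omega

lemma sum_inv_sq_le_of_subset_Ico {s : Finset ℕ} {L N : ℕ} (hL : 0 < L)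
    (hs : s ⊆ Finset.Ico L N) : ∑ d ∈ s, ((d : ℝ) ^ 2)⁻¹ ≤ 2 / L := by
  refine (Finset.sum_le_sum_of_subset_of_nonneg (t := Finset.Ioo (L - 1) N) (fun d hd => ?_)
    fun _ _ _ => by positivity).trans ((sum_Ioo_inv_sq_le (L - 1) N).trans_eq ?_)
  · have := Finset.mem_Ico.1 (hs hd)
    exact Finset.mem_Ioo.2 (by omega)
  · rw [Nat.cast_sub hL, Nat.cast_one, sub_add_cancel]

theorem isHormander_hilbertKernel (N : ℕ) :
    IsHormander N (fun i k => hilbertKernel N (i - k)) (4 * π) := by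
  intro c k L hck hk hN
  obtain ⟨s, rfl⟩ := Nat.exists_eq_add_of_le hck
  have hL : 0 < L := by omega
  have hnear : ∑ d ∈ Finset.Ico (2 * L) (N - L), ((d : ℝ) ^ 2)⁻¹ ≤ 2 / L :=
    sum_inv_sq_le_of_subset_Ico hL (Finset.Ico_subset_Ico (by omega) le_rfl)
  have hfar : ∑ d ∈ Finset.Ico (2 * L) (N - L), (((N - d : ℕ) : ℝ) ^ 2)⁻¹ ≤ 2 / L := by
    rw [Finset.sum_Ico_reflect (fun d : ℕ => ((d : ℝ) ^ 2)⁻¹) _ (by omega)]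
    exact sum_inv_sq_le_of_subset_Ico (N := N) hL (Finset.Ico_subset_Ico (by omega) (by omega))
  calc ∑ i ∈ farPoints N c L, ‖hilbertKernel N (i - (c + s : ℕ)) - hilbertKernel N (i - c)‖
      ≤ ∑ i ∈ farPoints N c L, π * L * (((cyclicOffset N c i : ℝ) ^ 2)⁻¹ +
          (((N - cyclicOffset N c i : ℕ) : ℝ) ^ 2)⁻¹) := by
        refine Finset.sum_le_sum fun i hi => ?_
        simp only [farPoints, Finset.mem_filter] at hi
        have hs := hilbertKernel_cyclicOffset (i := i) (by omega : c ≤ N) s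
        have h0 := hilbertKernel_cyclicOffset (i := i) (by omega : c ≤ N) 0
        rw [sub_zero, sub_zero] at h0
        rw [Nat.cast_add, ← sub_sub, ← hs, ← h0]
        exact norm_hilbertKernel_sub_le (by omega) hi.2.1 hi.2.2
    _ ≤ ∑ d ∈ Finset.Ico (2 * L) (N - L), π * L * (((d : ℝ) ^ 2)⁻¹ +
          (((N - d : ℕ) : ℝ) ^ 2)⁻¹) :=
        sum_farPoints_comp_cyclicOffset_le
          (g := fun d => π * L * (((d : ℝ) ^ 2)⁻¹ + (((N - d : ℕ) : ℝ) ^ 2)⁻¹)) (by omega)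
          fun d => by positivity
    _ ≤ π * L * (2 / L + 2 / L) := by
        rw [← Finset.mul_sum, Finset.sum_add_distrib]
        gcongr
    _ = 4 * π := by field_simp; ring

lemma sum_fourierChar_natCast_mul {a b : ℕ} (ha : a < N) (hb : b < N) :
    ∑ i ∈ Finset.range N, (𝐞 (i * (((a : ℝ) - b) / N)) : ℂ) = if a = b then (N : ℂ) else 0 := by
  have hN : (N : ℝ) ≠ 0 := Nat.cast_ne_zero.2 (by omega)
  split_ifs with h
  · simp [h]
  have hsum := one_sub_fourierChar_mul_sum N (((a : ℝ) - b) / N)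
  rw [mul_div_cancel₀ _ hN, show (a : ℝ) - b = ((a - b : ℤ) : ℝ) by push_cast; ring,
    fourierChar_intCast, sub_self] at hsum
  push_cast at hsum
  refine (mul_eq_zero.1 hsum).resolve_left fun hroot => h ?_
  rw [sub_eq_zero, eq_comm, Real.fourierChar_apply, Complex.exp_eq_one_iff] at hroot
  obtain ⟨n, hn⟩ := hroot
  have hquot : ((a : ℝ) - b) / N = n := by
    have : (2 * π * Complex.I) * (((a : ℝ) - b) / N : ℝ) = (2 * π * Complex.I) * (n : ℝ) := by
      push_cast at hn ⊢
      linear_combination hn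
    exact_mod_cast mul_left_cancel₀ Complex.two_pi_I_ne_zero this
  rw [div_eq_iff hN] at hquot
  have hdvd : (N : ℤ) ∣ a - b := ⟨n, by rw [mul_comm]; exact_mod_cast hquot⟩
  have := Int.eq_zero_of_abs_lt_dvd hdvd (by rw [abs_lt]; omega)
  omega

lemma sum_norm_sq_sum_mul_of_orthogonal {A : ℕ → ℕ → ℂ}
    (hA : ∀ a < N, ∀ b < N, ∑ i ∈ Finset.range N, A i a * (starRingEnd ℂ) (A i b) =
      if a = b then (N : ℂ) else 0) (c : ℕ → ℂ) :
    ∑ i ∈ Finset.range N, ‖∑ a ∈ Finset.range N, A i a * c a‖ ^ 2 =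
      N * ∑ a ∈ Finset.range N, ‖c a‖ ^ 2 := by
  suffices h : ((∑ i ∈ Finset.range N, ‖∑ a ∈ Finset.range N, A i a * c a‖ ^ 2 : ℝ) : ℂ) =
      ((N * ∑ a ∈ Finset.range N, ‖c a‖ ^ 2 : ℝ) : ℂ) by exact_mod_cast h
  push_cast
  simp_rw [← Complex.mul_conj', map_sum, map_mul, Finset.sum_mul_sum]
  rw [Finset.sum_comm, Finset.mul_sum]
  refine Finset.sum_congr rfl fun a ha => ?_
  rw [Finset.sum_comm]
  calc ∑ b ∈ Finset.range N, ∑ i ∈ Finset.range N,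
        A i a * c a * ((starRingEnd ℂ) (A i b) * (starRingEnd ℂ) (c b))
      = ∑ b ∈ Finset.range N, if a = b then N * (c a * (starRingEnd ℂ) (c b)) else 0 := by
        refine Finset.sum_congr rfl fun b hb => ?_
        rw [← ite_zero_mul, ← hA a (Finset.mem_range.1 ha) b (Finset.mem_range.1 hb),
          Finset.sum_mul]
        exact Finset.sum_congr rfl fun i _ => by ring
    _ = N * (c a * (starRingEnd ℂ) (c a)) := by rw [Finset.sum_ite_eq, if_pos ha]

/-- The operator with kernel `K` on functions on `{0, …, N-1}` with values in a complex vector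
space. -/
def kernelOp {E : Type*} [AddCommGroup E] [Module ℂ E] (N : ℕ) (K : ℕ → ℕ → ℂ) :
    (ℕ → E) →ₗ[ℂ] ℕ → E :=
  LinearMap.pi fun i => ∑ k ∈ Finset.range N, K i k • LinearMap.proj k

lemma kernelOp_apply {E : Type*} [AddCommGroup E] [Module ℂ E] (N : ℕ) (K : ℕ → ℕ → ℂ)
    (f : ℕ → E) (i : ℕ) : kernelOp N K f i = ∑ k ∈ Finset.range N, K i k • f k := by
  simp [kernelOp]

/-- The half-shifted discrete Hilbert transform on `{0, …, N-1}`. -/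
def hilbertOp (N : ℕ) {E : Type*} [AddCommGroup E] [Module ℂ E] : (ℕ → E) →ₗ[ℂ] ℕ → E :=
  kernelOp N fun i k => hilbertKernel N (i - k)

lemma hilbertOp_eq_sum_fourierChar (f : ℕ → ℂ) (i : ℕ) :
    hilbertOp N f i = (N : ℂ)⁻¹ * ∑ z ∈ Finset.range N, 𝐞 (z * (((i : ℝ) + 1 / 2) / N)) *
      ∑ k ∈ Finset.range N, 𝐞 (-(z * ((k : ℝ) / N))) * f k := by
  simp_rw [hilbertOp, kernelOp_apply, hilbertKernel, smul_eq_mul, Finset.mul_sum, Finset.sum_mul]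
  rw [Finset.sum_comm]
  refine Finset.sum_congr rfl fun z _ => Finset.sum_congr rfl fun k _ => ?_
  rw [show (z : ℝ) * (((((i : ℤ) - k : ℤ) : ℝ) + 1 / 2) / N) =
      z * (((i : ℝ) + 1 / 2) / N) + -(z * ((k : ℝ) / N)) by push_cast; ring, fourierChar_add]
  ring

theorem sum_norm_sq_hilbertOp (hN : N ≠ 0) (f : ℕ → ℂ) :
    ∑ i ∈ Finset.range N, ‖hilbertOp N f i‖ ^ 2 = ∑ i ∈ Finset.range N, ‖f i‖ ^ 2 := by
  simp_rw [hilbertOp_eq_sum_fourierChar, norm_mul, mul_pow]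
  rw [← Finset.mul_sum, sum_norm_sq_sum_mul_of_orthogonal, sum_norm_sq_sum_mul_of_orthogonal]
  · simp only [norm_inv, Complex.norm_natCast]
    field_simp
  · intro a ha b hb
    rw [if_congr (eq_comm (a := a)) rfl rfl, ← sum_fourierChar_natCast_mul hb ha]
    refine Finset.sum_congr rfl fun i _ => ?_
    rw [conj_fourierChar, ← fourierChar_add]
    ring_nf
  · intro a ha b hb
    calc _ = ∑ i ∈ Finset.range N, (𝐞 (i * (((a : ℝ) - b) / N)) : ℂ) *
          𝐞 (((a : ℝ) - b) / (2 * N)) := by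
          refine Finset.sum_congr rfl fun i _ => ?_
          rw [conj_fourierChar, ← fourierChar_add, ← fourierChar_add]
          ring_nf
      _ = _ := by
          rw [← Finset.sum_mul, sum_fourierChar_natCast_mul ha hb]
          split_ifs with h <;> simp [h]

end HilbertKernel

/-- The interval of the family `k ↦ [c k, c k + L k)` attached to the point `k`. -/
def block (c L : ℕ → ℕ) (k : ℕ) : Finset ℕ := Finset.Ico (c k) (c k + L k)

/-- The intervals `block c L k` form a partition of `[a, b)`; each of them is listed once for
every point `k` that it contains. -/
structure IsBlockPartition (a b : ℕ) (c L : ℕ → ℕ) : Prop where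
  mem_block : ∀ k ∈ Finset.Ico a b, k ∈ block c L k
  block_subset : ∀ k ∈ Finset.Ico a b, block c L k ⊆ Finset.Ico a b
  eq_of_mem_block : ∀ k ∈ Finset.Ico a b, ∀ j ∈ block c L k, c j = c k ∧ L j = L k

/-- The average of `f` over the block of `k`. -/
def blockAvg (𝕜 : Type*) [Field 𝕜] {E : Type*} [AddCommGroup E] [Module 𝕜 E] (c L : ℕ → ℕ)
    (f : ℕ → E) (k : ℕ) : E :=
  (L k : 𝕜)⁻¹ • ∑ j ∈ block c L k, f j

namespace IsBlockPartition

variable {a b d : ℕ} {c L c' L' : ℕ → ℕ}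

lemma length_pos (H : IsBlockPartition a b c L) {k : ℕ} (hk : k ∈ Finset.Ico a b) : 0 < L k := by
  have := H.mem_block k hk
  rw [block, Finset.mem_Ico] at this
  omega

lemma start_mem_block (H : IsBlockPartition a b c L) {k : ℕ} (hk : k ∈ Finset.Ico a b) :
    c k ∈ block c L k := by
  simpa [block] using H.length_pos hk

lemma start_mem (H : IsBlockPartition a b c L) {k : ℕ} (hk : k ∈ Finset.Ico a b) :
    c k ∈ Finset.Ico a b :=
  H.block_subset k hk (H.start_mem_block hk)

lemma mem_block_comm (H : IsBlockPartition a b c L) {j k : ℕ} (hk : k ∈ Finset.Ico a b)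
    (hj : j ∈ block c L k) : k ∈ block c L j := by
  obtain ⟨hc, hL⟩ := H.eq_of_mem_block k hk j hj
  rw [block, hc, hL]
  exact H.mem_block k hk

lemma append (H : IsBlockPartition a b c L) (H' : IsBlockPartition b d c' L') (hab : a ≤ b)
    (hbd : b ≤ d) :
    IsBlockPartition a d (fun k => if k < b then c k else c' k)
      (fun k => if k < b then L k else L' k) := by
  have hleft : ∀ k < b, block (fun k => if k < b then c k else c' k)
      (fun k => if k < b then L k else L' k) k = block c L k := fun k hk => by simp [block, hk]
  have hright : ∀ k, b ≤ k → block (fun k => if k < b then c k else c' k)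
      (fun k => if k < b then L k else L' k) k = block c' L' k := fun k hk => by
    simp [block, hk.not_gt]
  constructor <;> intro k hk <;> rw [Finset.mem_Ico] at hk <;> rcases lt_or_ge k b with hkb | hkb
  · exact hleft k hkb ▸ H.mem_block k (Finset.mem_Ico.2 ⟨hk.1, hkb⟩)
  · exact hright k hkb ▸ H'.mem_block k (Finset.mem_Ico.2 ⟨hkb, hk.2⟩)
  · exact hleft k hkb ▸ (H.block_subset k (Finset.mem_Ico.2 ⟨hk.1, hkb⟩)).trans
      (Finset.Ico_subset_Ico_right hbd)
  · exact hright k hkb ▸ (H'.block_subset k (Finset.mem_Ico.2 ⟨hkb, hk.2⟩)).trans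
      (Finset.Ico_subset_Ico_left hab)
  · rw [hleft k hkb]
    intro j hj
    have hk' := Finset.mem_Ico.2 ⟨hk.1, hkb⟩
    simp only [if_pos hkb, if_pos (Finset.mem_Ico.1 (H.block_subset k hk' hj)).2]
    exact H.eq_of_mem_block k hk' j hj
  · rw [hright k hkb]
    intro j hj
    have hk' := Finset.mem_Ico.2 ⟨hkb, hk.2⟩
    simp only [if_neg hkb.not_gt, if_neg (Finset.mem_Ico.1 (H'.block_subset k hk' hj)).1.not_gt]
    exact H'.eq_of_mem_block k hk' j hj

lemma sum_smul_blockAvg {𝕜 E : Type*} [Field 𝕜] [CharZero 𝕜] [AddCommGroup E] [Module 𝕜 E]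
    (H : IsBlockPartition a b c L) (φ : ℕ → 𝕜) (f : ℕ → E) :
    ∑ k ∈ Finset.Ico a b, φ (c k) • blockAvg 𝕜 c L f k =
      ∑ k ∈ Finset.Ico a b, φ (c k) • f k := by
  calc ∑ k ∈ Finset.Ico a b, φ (c k) • blockAvg 𝕜 c L f k
      = ∑ k ∈ Finset.Ico a b, ∑ j ∈ block c L k, (φ (c k) * (L k : 𝕜)⁻¹) • f j := by
        simp_rw [blockAvg, smul_smul, Finset.smul_sum]
    _ = ∑ j ∈ Finset.Ico a b, ∑ k ∈ block c L j, (φ (c k) * (L k : 𝕜)⁻¹) • f j :=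
        Finset.sum_comm' fun k j =>
          ⟨fun ⟨hk, hj⟩ => ⟨H.mem_block_comm hk hj, H.block_subset k hk hj⟩,
            fun ⟨hk, hj⟩ => ⟨H.block_subset j hj hk, H.mem_block_comm hj hk⟩⟩
    _ = ∑ j ∈ Finset.Ico a b, φ (c j) • f j := by
        refine Finset.sum_congr rfl fun j hj => ?_
        have hL : (L j : 𝕜) ≠ 0 := Nat.cast_ne_zero.2 (H.length_pos hj).ne'
        rw [Finset.sum_congr rfl fun k hk => by
          rw [(H.eq_of_mem_block j hj k hk).1, (H.eq_of_mem_block j hj k hk).2], Finset.sum_const,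
          block, Nat.card_Ico, Nat.add_sub_cancel_left, ← Nat.cast_smul_eq_nsmul 𝕜, smul_smul,
          mul_left_comm, mul_inv_cancel₀ hL, mul_one]

end IsBlockPartition

/-- The stopping-time partition of Calderón and Zygmund at height `t`: a block on which the average
of `F` was not yet large has length one, and no block average exceeds `2 * t`. -/
structure IsCalderonZygmundPartition (F : ℕ → ℝ) (t : ℝ) (a b : ℕ) (c L : ℕ → ℕ) : Prop extends
    IsBlockPartition a b c L where
  sum_block_le : ∀ k ∈ Finset.Ico a b, ∑ j ∈ block c L k, F j ≤ 2 * t * L k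
  le_sum_block : ∀ k ∈ Finset.Ico a b, L k ≠ 1 → t * L k ≤ ∑ j ∈ block c L k, F j

lemma IsCalderonZygmundPartition.append {F : ℕ → ℝ} {t : ℝ} {a b d : ℕ} {c L c' L' : ℕ → ℕ}
    (H : IsCalderonZygmundPartition F t a b c L) (H' : IsCalderonZygmundPartition F t b d c' L')
    (hab : a ≤ b) (hbd : b ≤ d) :
    IsCalderonZygmundPartition F t a d (fun k => if k < b then c k else c' k)
      (fun k => if k < b then L k else L' k) where
  toIsBlockPartition := H.toIsBlockPartition.append H'.toIsBlockPartition hab hbd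
  sum_block_le k hk := by
    rw [Finset.mem_Ico] at hk
    rcases lt_or_ge k b with hkb | hkb
    · simpa [block, hkb] using H.sum_block_le k (Finset.mem_Ico.2 ⟨hk.1, hkb⟩)
    · simpa [block, hkb.not_gt] using H'.sum_block_le k (Finset.mem_Ico.2 ⟨hkb, hk.2⟩)
  le_sum_block k hk := by
    rw [Finset.mem_Ico] at hk
    rcases lt_or_ge k b with hkb | hkb
    · simpa [block, hkb] using H.le_sum_block k (Finset.mem_Ico.2 ⟨hk.1, hkb⟩)
    · simpa [block, hkb.not_gt] using H'.le_sum_block k (Finset.mem_Ico.2 ⟨hkb, hk.2⟩)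

lemma isCalderonZygmundPartition_const {F : ℕ → ℝ} {t : ℝ} {a n : ℕ}
    (hup : ∑ j ∈ Finset.Ico a (a + n), F j ≤ 2 * t * n)
    (hlow : n ≠ 1 → t * n ≤ ∑ j ∈ Finset.Ico a (a + n), F j) :
    IsCalderonZygmundPartition F t a (a + n) (fun _ => a) (fun _ => n) where
  mem_block _ hk := hk
  block_subset _ _ := subset_rfl
  eq_of_mem_block _ _ _ _ := ⟨rfl, rfl⟩
  sum_block_le _ _ := hup
  le_sum_block _ _ := hlow

theorem exists_isCalderonZygmundPartition {F : ℕ → ℝ} (hF : ∀ i, 0 ≤ F i) {t : ℝ} (ht : 0 ≤ t)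
    (m : ℕ) : ∀ a, ∑ j ∈ Finset.Ico a (a + 2 ^ m), F j ≤ t * 2 ^ m →
      ∃ c L, IsCalderonZygmundPartition F t a (a + 2 ^ m) c L := by
  induction m with
  | zero =>
    intro a h
    refine ⟨_, _, isCalderonZygmundPartition_const ?_ (by simp)⟩
    rw [pow_zero] at h
    push_cast
    linarith
  | succ m ih =>
    have half : ∀ a, ∑ j ∈ Finset.Ico a (a + 2 ^ m), F j ≤ t * 2 ^ (m + 1) →
        ∃ c L, IsCalderonZygmundPartition F t a (a + 2 ^ m) c L := fun a h => by
      rcases le_or_gt (∑ j ∈ Finset.Ico a (a + 2 ^ m), F j) (t * 2 ^ m) with hle | hgt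
      · exact ih a hle
      · refine ⟨_, _, isCalderonZygmundPartition_const ?_ fun _ => ?_⟩ <;> push_cast
        · rw [pow_succ] at h
          linarith
        · exact hgt.le
    intro a h
    rw [show a + 2 ^ (m + 1) = a + 2 ^ m + 2 ^ m by ring] at h ⊢
    rw [← Finset.sum_Ico_consecutive F (Nat.le_add_right a _) (Nat.le_add_right _ _)] at h
    have hl : 0 ≤ ∑ j ∈ Finset.Ico a (a + 2 ^ m), F j := Finset.sum_nonneg fun _ _ => hF _
    have hr : 0 ≤ ∑ j ∈ Finset.Ico (a + 2 ^ m) (a + 2 ^ m + 2 ^ m), F j :=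
      Finset.sum_nonneg fun _ _ => hF _
    obtain ⟨c, L, H⟩ := half a (by linarith)
    obtain ⟨c', L', H'⟩ := half (a + 2 ^ m) (by linarith)
    exact ⟨_, _, H.append H' (Nat.le_add_right _ _) (Nat.le_add_right _ _)⟩

lemma mul_card_filter_lt_le_sum {α : Type*} (s : Finset α) {u : α → ℝ} (hu : ∀ i, 0 ≤ u i)
    (t : ℝ) : t * #{i ∈ s | t < u i} ≤ ∑ i ∈ s, u i := by
  rw [mul_comm, ← nsmul_eq_mul]
  exact (Finset.card_nsmul_le_sum _ _ _ fun i hi => (Finset.mem_filter.1 hi).2.le).trans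
    (Finset.sum_le_sum_of_subset_of_nonneg (Finset.filter_subset _ _) fun _ _ _ => hu _)

lemma rpow_mul_card_filter_lt_le_sum_rpow {α : Type*} (s : Finset α) {u : α → ℝ}
    (hu : ∀ i, 0 ≤ u i) {q t : ℝ} (hq : 0 < q) (ht : 0 ≤ t) :
    t ^ q * #{i ∈ s | t < u i} ≤ ∑ i ∈ s, u i ^ q := by
  convert mul_card_filter_lt_le_sum s (fun i => Real.rpow_nonneg (hu i) q) (t ^ q) using 5 with i
  exact (Real.rpow_lt_rpow_iff ht (hu i) hq).symm

lemma card_filter_lt_le_card_filter_half_lt_add {α : Type*} {s : Finset α} {u v w : α → ℝ}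
    (h : ∀ i ∈ s, u i ≤ v i + w i) (t : ℝ) :
    #{i ∈ s | t < u i} ≤ #{i ∈ s | t / 2 < v i} + #{i ∈ s | t / 2 < w i} := by
  classical
  refine (Finset.card_le_card fun i hi => ?_).trans (Finset.card_union_le _ _)
  rw [Finset.mem_filter] at hi
  rw [← Finset.filter_or, Finset.mem_filter]
  refine ⟨hi.1, or_iff_not_imp_left.2 fun hv => ?_⟩
  linarith [h i hi.1]

/-- The points near a long block, on which a singular integral of the bad part is not controlled. -/
def exceptionalSet (N : ℕ) (c L : ℕ → ℕ) : Finset ℕ :=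
  {k ∈ Finset.range N | c k = k ∧ L k ≠ 1}.biUnion fun k => Finset.range N \ farPoints N k (L k)

lemma card_range_sdiff_farPoints_le {N c : ℕ} (hc : c ≤ N) (L : ℕ) :
    #(Finset.range N \ farPoints N c L) ≤ 3 * L := by
  have hinj : Set.InjOn (cyclicOffset N c) (Finset.range N \ farPoints N c L : Finset ℕ) :=
    (cyclicOffset_injOn hc).mono (by exact_mod_cast Finset.sdiff_subset)
  calc #(Finset.range N \ farPoints N c L)
      ≤ #(Finset.range (2 * L) ∪ Finset.Ico (N - L) N) := by
        rw [← Finset.card_image_of_injOn hinj]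
        refine Finset.card_le_card fun d hd => ?_
        obtain ⟨i, hi, rfl⟩ := Finset.mem_image.1 hd
        simp only [farPoints, Finset.mem_sdiff, Finset.mem_range, Finset.mem_filter] at hi
        have := cyclicOffset_lt hc hi.1
        simp only [Finset.mem_union, Finset.mem_range, Finset.mem_Ico]
        omega
    _ ≤ 3 * L := by
        refine (Finset.card_union_le _ _).trans ?_
        rw [Finset.card_range, Nat.card_Ico]
        omega

section CalderonZygmund

variable {E : Type*} [AddCommGroup E] [Module ℂ E] {ν : Seminorm ℂ E} {N : ℕ} {t : ℝ}
  {c L : ℕ → ℕ} {f : ℕ → E}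

lemma seminorm_blockAvg_le_blockAvg (ν : Seminorm ℂ E) (c L : ℕ → ℕ) (f : ℕ → E) (k : ℕ) :
    ν (blockAvg ℂ c L f k) ≤ blockAvg ℝ c L (fun j => ν (f j)) k := by
  rw [blockAvg, map_smul_eq_mul, norm_inv, Complex.norm_natCast, blockAvg, smul_eq_mul]
  gcongr
  exact Finset.le_sum_of_subadditive ν (map_zero ν).le (map_add_le_add ν) _ f

namespace IsCalderonZygmundPartition

lemma seminorm_blockAvg_le {a b : ℕ}
    (H : IsCalderonZygmundPartition (fun j => ν (f j)) t a b c L) {k : ℕ}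
    (hk : k ∈ Finset.Ico a b) : ν (blockAvg ℂ c L f k) ≤ 2 * t := by
  have hL : (0 : ℝ) < L k := Nat.cast_pos.2 (H.length_pos hk)
  refine (seminorm_blockAvg_le_blockAvg ν c L f k).trans ?_
  rw [blockAvg, smul_eq_mul, inv_mul_le_iff₀ hL, mul_comm (L k : ℝ)]
  exact H.sum_block_le k hk

lemma blockAvg_eq_self {F : ℕ → ℝ} {a b : ℕ} (H : IsCalderonZygmundPartition F t a b c L)
    {k : ℕ} (hk : k ∈ Finset.Ico a b) (hL : L k = 1) : blockAvg ℂ c L f k = f k := by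
  have hmem := H.mem_block k hk
  rw [block, hL, Nat.Ico_succ_singleton, Finset.mem_singleton] at hmem
  rw [blockAvg, block, hL, Nat.Ico_succ_singleton, Finset.sum_singleton, ← hmem, Nat.cast_one,
    inv_one, one_smul]

end IsCalderonZygmundPartition

lemma sum_seminorm_blockAvg_le (ν : Seminorm ℂ E) (f : ℕ → E) (H : IsBlockPartition 0 N c L) :
    ∑ k ∈ Finset.range N, ν (blockAvg ℂ c L f k) ≤ ∑ k ∈ Finset.range N, ν (f k) := by
  have hsum := H.sum_smul_blockAvg (fun _ => (1 : ℝ)) fun k => ν (f k)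
  simp only [one_smul, ← Finset.range_eq_Ico] at hsum
  exact hsum ▸ Finset.sum_le_sum fun k _ => seminorm_blockAvg_le_blockAvg ν c L f k

lemma sum_seminorm_sub_blockAvg_le (ν : Seminorm ℂ E) (f : ℕ → E)
    (H : IsBlockPartition 0 N c L) :
    ∑ k ∈ Finset.range N, ν (f k - blockAvg ℂ c L f k) ≤ 2 * ∑ k ∈ Finset.range N, ν (f k) := by
  refine (Finset.sum_le_sum fun k _ => map_sub_le_add ν _ _).trans ?_
  rw [Finset.sum_add_distrib, two_mul]
  exact add_le_add le_rfl (sum_seminorm_blockAvg_le ν f H)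

lemma sum_rpow_le_rpow_sub_one_mul_sum {α : Type*} {s : Finset α} {u : α → ℝ} {M q : ℝ}
    (hq : 1 ≤ q) (hu : ∀ k ∈ s, 0 ≤ u k) (hM : ∀ k ∈ s, u k ≤ M) :
    ∑ k ∈ s, u k ^ q ≤ M ^ (q - 1) * ∑ k ∈ s, u k := by
  rw [Finset.mul_sum]
  refine Finset.sum_le_sum fun k hk => ?_
  rcases (hu k hk).eq_or_lt with h0 | h0
  · rw [← h0, Real.zero_rpow (by linarith), mul_zero]
  · calc u k ^ q = u k ^ (q - 1) * u k := by rw [← Real.rpow_add_one h0.ne', sub_add_cancel]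
      _ ≤ M ^ (q - 1) * u k := by
        have := hM k hk
        gcongr

lemma kernelOp_sub_blockAvg (H : IsBlockPartition 0 N c L) (K : ℕ → ℕ → ℂ) (f : ℕ → E) (i : ℕ) :
    kernelOp N K (f - blockAvg ℂ c L f) i =
      ∑ k ∈ Finset.range N, (K i k - K i (c k)) • (f k - blockAvg ℂ c L f k) := by
  have hcancel := H.sum_smul_blockAvg (fun j => K i j) f
  rw [← Finset.range_eq_Ico] at hcancel
  simp only [kernelOp_apply, Pi.sub_apply, sub_smul, smul_sub, Finset.sum_sub_distrib, hcancel]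
  abel

lemma mul_card_exceptionalSet_le {F : ℕ → ℝ} (hF : ∀ k, 0 ≤ F k) (ht : 0 ≤ t)
    (H : IsCalderonZygmundPartition F t 0 N c L) :
    t * #(exceptionalSet N c L) ≤ 3 * ∑ k ∈ Finset.range N, F k := by
  set S := {k ∈ Finset.range N | c k = k ∧ L k ≠ 1}
  have hmem : ∀ k ∈ S, k ∈ Finset.Ico 0 N := fun k hk => by
    rw [← Finset.range_eq_Ico]
    exact (Finset.mem_filter.1 hk).1
  have hdisj : (S : Set ℕ).PairwiseDisjoint (block c L) := by
    intro k hk l hl hne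
    refine Finset.disjoint_left.2 fun j hjk hjl => hne ?_
    rw [← (Finset.mem_filter.1 hk).2.1, ← (Finset.mem_filter.1 hl).2.1,
      ← (H.eq_of_mem_block k (hmem k hk) j hjk).1, (H.eq_of_mem_block l (hmem l hl) j hjl).1]
  calc t * #(exceptionalSet N c L) ≤ t * ∑ k ∈ S, 3 * L k := by
        gcongr
        exact_mod_cast Finset.card_biUnion_le.trans (Finset.sum_le_sum fun k hk =>
          card_range_sdiff_farPoints_le (Finset.mem_Ico.1 (hmem k hk)).2.le (L k))
    _ = 3 * ∑ k ∈ S, t * L k := by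
        push_cast
        rw [← Finset.mul_sum, ← Finset.mul_sum]
        ring
    _ ≤ 3 * ∑ k ∈ S, ∑ j ∈ block c L k, F j := by
        gcongr with k hk
        exact H.le_sum_block k (hmem k hk) (Finset.mem_filter.1 hk).2.2
    _ = 3 * ∑ j ∈ S.biUnion (block c L), F j := by rw [Finset.sum_biUnion hdisj]
    _ ≤ 3 * ∑ k ∈ Finset.range N, F k := by
        gcongr
        · exact fun k _ _ => hF k
        · exact Finset.biUnion_subset.2 fun k hk =>
            (H.block_subset k (hmem k hk)).trans (Finset.range_eq_Ico N).ge

lemma mem_farPoints_of_notMem_exceptionalSet (H : IsBlockPartition 0 N c L) {i k : ℕ}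
    (hi : i ∈ Finset.range N \ exceptionalSet N c L) (hk : k ∈ Finset.Ico 0 N) (hL : L k ≠ 1) :
    i ∈ farPoints N (c k) (L k) := by
  obtain ⟨hcc, hcL⟩ := H.eq_of_mem_block k hk _ (H.start_mem_block hk)
  rw [Finset.mem_sdiff] at hi
  by_contra hfar
  refine hi.2 (Finset.mem_biUnion.2 ⟨c k, Finset.mem_filter.2 ⟨?_, hcc, hcL ▸ hL⟩, ?_⟩)
  · rw [Finset.range_eq_Ico]
    exact H.start_mem hk
  · rw [hcL]
    exact Finset.mem_sdiff.2 ⟨hi.1, hfar⟩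

lemma sum_seminorm_kernelOp_sub_blockAvg_le {K : ℕ → ℕ → ℂ} {B : ℝ} (hK : IsHormander N K B)
    (hB : 0 ≤ B) (H : IsCalderonZygmundPartition (fun k => ν (f k)) t 0 N c L) :
    ∑ i ∈ Finset.range N \ exceptionalSet N c L, ν (kernelOp N K (f - blockAvg ℂ c L f) i) ≤
      2 * B * ∑ k ∈ Finset.range N, ν (f k) := by
  set O := Finset.range N \ exceptionalSet N c L
  set b := f - blockAvg ℂ c L f with hb
  have hkernel : ∀ k ∈ Finset.range N,
      (∑ i ∈ O, ‖K i k - K i (c k)‖) * ν (b k) ≤ B * ν (b k) := by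
    intro k hk
    rw [Finset.range_eq_Ico] at hk
    by_cases hL : L k = 1
    · simp [hb, H.blockAvg_eq_self hk hL]
    have hmem := H.mem_block k hk
    have hend := H.block_subset k hk
    simp only [block, Finset.mem_Ico, Finset.Ico_subset_Ico_iff (Nat.lt_add_of_pos_right
      (H.length_pos hk))] at hmem hend
    gcongr
    refine le_trans (Finset.sum_le_sum_of_subset_of_nonneg (fun i hi => ?_) fun _ _ _ =>
      norm_nonneg _) (hK (c k) k (L k) hmem.1 hmem.2 hend.2)
    exact mem_farPoints_of_notMem_exceptionalSet H.toIsBlockPartition hi hk hL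
  calc ∑ i ∈ O, ν (kernelOp N K b i)
      ≤ ∑ i ∈ O, ∑ k ∈ Finset.range N, ‖K i k - K i (c k)‖ * ν (b k) := by
        refine Finset.sum_le_sum fun i _ => ?_
        rw [kernelOp_sub_blockAvg H.toIsBlockPartition]
        refine (Finset.le_sum_of_subadditive ν (map_zero ν).le (map_add_le_add ν) _ _).trans_eq
          (Finset.sum_congr rfl fun k _ => map_smul_eq_mul ν _ _)
    _ = ∑ k ∈ Finset.range N, (∑ i ∈ O, ‖K i k - K i (c k)‖) * ν (b k) := by
        rw [Finset.sum_comm]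
        simp_rw [Finset.sum_mul]
    _ ≤ ∑ k ∈ Finset.range N, B * ν (b k) := Finset.sum_le_sum hkernel
    _ ≤ 2 * B * ∑ k ∈ Finset.range N, ν (f k) := by
        rw [← Finset.mul_sum, mul_comm 2 B, mul_assoc]
        gcongr
        exact sum_seminorm_sub_blockAvg_le ν f H.toIsBlockPartition

lemma mul_card_good_le {T : (ℕ → E) → ℕ → E} {q A : ℝ} (hq : 1 ≤ q) (hA : 0 ≤ A) (ht : 0 < t)
    (H : IsCalderonZygmundPartition (fun k => ν (f k)) t 0 N c L)
    (hT : ∑ i ∈ Finset.range N, ν (T (blockAvg ℂ c L f) i) ^ q ≤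
      A * ∑ i ∈ Finset.range N, ν (blockAvg ℂ c L f i) ^ q) :
    t * #{i ∈ Finset.range N | t / 2 < ν (T (blockAvg ℂ c L f) i)} ≤
      A * 2 ^ (2 * q - 1) * ∑ k ∈ Finset.range N, ν (f k) := by
  set S := ∑ k ∈ Finset.range N, ν (f k)
  have hgood : ∑ i ∈ Finset.range N, ν (blockAvg ℂ c L f i) ^ q ≤ (2 * t) ^ (q - 1) * S := by
    refine (sum_rpow_le_rpow_sub_one_mul_sum hq (fun k _ => apply_nonneg ν _) fun k hk =>
      H.seminorm_blockAvg_le (Finset.range_eq_Ico N ▸ hk)).trans ?_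
    gcongr
    exact sum_seminorm_blockAvg_le ν f H.toIsBlockPartition
  have hcheb := (rpow_mul_card_filter_lt_le_sum_rpow (Finset.range N)
    (fun i => apply_nonneg ν (T (blockAvg ℂ c L f) i)) (by linarith) (half_pos ht).le).trans
    (hT.trans (mul_le_mul_of_nonneg_left hgood hA))
  set n := #{i ∈ Finset.range N | t / 2 < ν (T (blockAvg ℂ c L f) i)}
  have ht2 : 0 < (t / 2) ^ q := by positivity
  refine le_of_mul_le_mul_left ?_ ht2
  calc (t / 2) ^ q * (t * n) = t * ((t / 2) ^ q * n) := by ring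
    _ ≤ t * (A * ((2 * t) ^ (q - 1) * S)) := by gcongr
    _ = (t / 2) ^ q * (A * 2 ^ (2 * q - 1) * S) := by
      rw [Real.div_rpow ht.le zero_le_two, Real.mul_rpow zero_le_two ht.le,
        show 2 * q - 1 = q + (q - 1) by ring, Real.rpow_add two_pos, Real.rpow_sub_one ht.ne']
      field_simp

theorem IsHormander.weak_type {m : ℕ} {K : ℕ → ℕ → ℂ} {q A B : ℝ}
    (hK : IsHormander (2 ^ m) K B) (hB : 0 ≤ B) (hq : 1 ≤ q) (hA : 0 ≤ A)
    (hstrong : ∀ f : ℕ → E, ∑ i ∈ Finset.range (2 ^ m), ν (kernelOp (2 ^ m) K f i) ^ q ≤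
      A * ∑ i ∈ Finset.range (2 ^ m), ν (f i) ^ q) (f : ℕ → E) (ht : 0 < t) :
    t * #{i ∈ Finset.range (2 ^ m) | t < ν (kernelOp (2 ^ m) K f i)} ≤
      (A * 2 ^ (2 * q - 1) + 4 * B + 3) * ∑ i ∈ Finset.range (2 ^ m), ν (f i) := by
  set N := 2 ^ m
  set S := ∑ i ∈ Finset.range N, ν (f i)
  have hA' : 0 ≤ A * (2 : ℝ) ^ (2 * q - 1) * S := by positivity
  have hB' : 0 ≤ B * S := by positivity
  rcases lt_or_ge (t * N) S with hbig | hsmall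
  · have hcard : (#{i ∈ Finset.range N | t < ν (kernelOp N K f i)} : ℝ) ≤ N := by
      exact_mod_cast (Finset.card_filter_le _ _).trans (Finset.card_range N).le
    nlinarith [mul_le_mul_of_nonneg_left hcard ht.le]
  obtain ⟨c, L, H⟩ := exists_isCalderonZygmundPartition (F := fun k => ν (f k))
    (fun k => apply_nonneg ν (f k)) ht.le m 0 (by
      rw [zero_add, ← Finset.range_eq_Ico]
      exact_mod_cast hsmall)
  rw [zero_add] at H
  set g := blockAvg ℂ c L f
  have hgood := mul_card_good_le (T := kernelOp N K) hq hA ht H (hstrong _)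
  have hbad := (mul_card_filter_lt_le_sum (Finset.range N \ exceptionalSet N c L)
    (fun i => apply_nonneg ν (kernelOp N K (f - g) i)) (t / 2)).trans
    (sum_seminorm_kernelOp_sub_blockAvg_le hK hB H)
  have hexc := mul_card_exceptionalSet_le (fun k => apply_nonneg ν (f k)) ht.le H
  have hsplit : #{i ∈ Finset.range N | t < ν (kernelOp N K f i)} ≤
      #{i ∈ Finset.range N | t / 2 < ν (kernelOp N K g i)} +
        #{i ∈ Finset.range N | t / 2 < ν (kernelOp N K (f - g) i)} :=
    card_filter_lt_le_card_filter_half_lt_add (fun i _ => by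
      have := map_add_le_add ν (kernelOp N K g i) (kernelOp N K (f - g) i)
      rwa [← Pi.add_apply, ← map_add, add_sub_cancel] at this) t
  have hremove : #{i ∈ Finset.range N | t / 2 < ν (kernelOp N K (f - g) i)} ≤
      #{i ∈ Finset.range N \ exceptionalSet N c L | t / 2 < ν (kernelOp N K (f - g) i)} +
        #(exceptionalSet N c L) := by
    refine (Finset.card_le_card fun i hi => ?_).trans (Finset.card_union_le _ _)
    simp only [Finset.mem_union, Finset.mem_filter, Finset.mem_sdiff] at hi ⊢
    tauto
  have hcount := (Nat.cast_le (α := ℝ)).2 (hsplit.trans (Nat.add_le_add_left hremove _))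
  push_cast at hcount
  nlinarith [mul_le_mul_of_nonneg_left hcount ht.le]

end CalderonZygmund

section Interpolation

lemma sum_zpow_rpow_le {s b : ℝ} (hs : 0 < s) (hb : 0 < b) (J : Finset ℤ) :
    ∑ j ∈ J with (2 : ℝ) ^ j ≤ b, ((2 : ℝ) ^ j) ^ s ≤ (1 - 2 ^ (-s))⁻¹ * b ^ s := by
  set ρ : ℝ := 2 ^ (-s) with hρ
  have hρ0 : 0 ≤ ρ := by positivity
  have hρ1 : ρ < 1 := Real.rpow_lt_one_of_one_lt_of_neg one_lt_two (neg_lt_zero.2 hs)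
  obtain ⟨n, hnb, hbn⟩ := exists_mem_Ico_zpow hb one_lt_two
  have hle : ∀ j ∈ J.filter (fun j : ℤ => (2 : ℝ) ^ j ≤ b), j ≤ n := fun j hj =>
    Int.lt_add_one_iff.1 ((zpow_lt_zpow_iff_right₀ (one_lt_two (α := ℝ))).1
      ((Finset.mem_filter.1 hj).2.trans_lt hbn))
  have hterm : ∀ j ∈ J.filter (fun j : ℤ => (2 : ℝ) ^ j ≤ b),
      ((2 : ℝ) ^ j) ^ s = ((2 : ℝ) ^ n) ^ s * ρ ^ (n - j).toNat := by
    intro j hj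
    have hcast : ((n - j).toNat : ℝ) = n - j := by
      exact_mod_cast congrArg (Int.cast (R := ℝ)) (Int.toNat_of_nonneg (sub_nonneg.2 (hle j hj)))
    rw [← Real.rpow_natCast, hcast, hρ, ← Real.rpow_intCast, ← Real.rpow_intCast,
      ← Real.rpow_mul zero_le_two, ← Real.rpow_mul zero_le_two, ← Real.rpow_mul zero_le_two,
      ← Real.rpow_add two_pos]
    ring_nf
  have hgeom : ∑ j ∈ J with (2 : ℝ) ^ j ≤ b, ρ ^ (n - j).toNat ≤ (1 - ρ)⁻¹ := by
    rw [← Finset.sum_image (f := fun i : ℕ => ρ ^ i) (g := fun j : ℤ => (n - j).toNat),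
      ← tsum_geometric_of_lt_one hρ0 hρ1]
    · exact (summable_geometric_of_lt_one hρ0 hρ1).sum_le_tsum _ fun i _ => by positivity
    · intro i hi j hj hij
      have := hle i hi
      have := hle j hj
      dsimp only at hij
      omega
  rw [Finset.sum_congr rfl hterm, ← Finset.mul_sum, mul_comm]
  gcongr

lemma sum_zpow_rpow_neg_le {s b : ℝ} (hs : 0 < s) (hb : 0 < b) (J : Finset ℤ) :
    ∑ j ∈ J with b ≤ (2 : ℝ) ^ j, ((2 : ℝ) ^ j) ^ (-s) ≤ (1 - 2 ^ (-s))⁻¹ * b ^ (-s) := by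
  have h := sum_zpow_rpow_le hs (inv_pos.2 hb) (J.image fun j => -j)
  rw [Finset.filter_image, Finset.sum_image fun _ _ _ _ h => neg_injective h, Real.inv_rpow hb.le,
    ← Real.rpow_neg hb.le] at h
  refine le_of_eq_of_le (Finset.sum_congr (Finset.filter_congr fun j _ => ?_) fun j _ => ?_) h
  · rw [zpow_neg, inv_le_inv₀ (by positivity) hb]
  · rw [zpow_neg, Real.inv_rpow (by positivity), Real.rpow_neg (by positivity)]

variable {α β : Type*} {p q : ℝ}

lemma exists_sum_rpow_le_sum_zpow_mul_card (hp : 0 < p) (s : Finset β) {u : β → ℝ}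
    (hu : ∀ i, 0 ≤ u i) :
    ∃ J : Finset ℤ, ∑ i ∈ s, u i ^ p ≤
      2 ^ p * ∑ j ∈ J, ((2 : ℝ) ^ j) ^ p * #{i ∈ s | (2 : ℝ) ^ j < u i} := by
  have hlog : ∀ i, ∃ j : ℤ, 0 < u i → u i ∈ Set.Ioc ((2 : ℝ) ^ j) (2 ^ (j + 1)) := fun i => by
    by_cases h : 0 < u i
    · exact (exists_mem_Ioc_zpow h one_lt_two).imp fun j hj _ => hj
    · exact ⟨0, fun h' => absurd h' h⟩
  choose e he using hlog
  refine ⟨s.image e, ?_⟩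
  calc ∑ i ∈ s, u i ^ p
      ≤ ∑ i ∈ s, 2 ^ p * ∑ j ∈ s.image e, if (2 : ℝ) ^ j < u i then ((2 : ℝ) ^ j) ^ p else 0 := by
        refine Finset.sum_le_sum fun i hi => ?_
        have hnonneg : ∀ j ∈ s.image e, 0 ≤ if (2 : ℝ) ^ j < u i then ((2 : ℝ) ^ j) ^ p else 0 :=
          fun j _ => by positivity
        rcases (hu i).eq_or_lt with h0 | h0
        · rw [show u i ^ p = 0 by rw [← h0, Real.zero_rpow hp.ne']]
          exact mul_nonneg (by positivity) (Finset.sum_nonneg hnonneg)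
        · calc u i ^ p ≤ (2 * (2 : ℝ) ^ e i) ^ p := by
                rw [← zpow_one_add₀ two_ne_zero, add_comm]
                exact Real.rpow_le_rpow (hu i) (he i h0).2 hp.le
            _ = 2 ^ p * if (2 : ℝ) ^ e i < u i then ((2 : ℝ) ^ e i) ^ p else 0 := by
                rw [if_pos (he i h0).1, Real.mul_rpow zero_le_two (by positivity)]
            _ ≤ _ := by
                gcongr
                exact Finset.single_le_sum hnonneg (Finset.mem_image_of_mem e hi)
    _ = 2 ^ p * ∑ j ∈ s.image e, ((2 : ℝ) ^ j) ^ p * #{i ∈ s | (2 : ℝ) ^ j < u i} := by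
        rw [← Finset.mul_sum, Finset.sum_comm]
        simp_rw [← Finset.sum_filter, Finset.sum_const, nsmul_eq_mul, mul_comm]

lemma sum_zpow_rpow_mul_sum_lt_le (hp : 1 < p) (J : Finset ℤ) (s : Finset α) {u : α → ℝ}
    (hu : ∀ k, 0 ≤ u k) :
    ∑ j ∈ J, ((2 : ℝ) ^ j) ^ (p - 1) * ∑ k ∈ s with (2 : ℝ) ^ j < u k, u k ≤
      (1 - 2 ^ (-(p - 1)))⁻¹ * ∑ k ∈ s, u k ^ p := by
  simp_rw [Finset.sum_filter, Finset.mul_sum]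
  rw [Finset.sum_comm]
  refine Finset.sum_le_sum fun k _ => ?_
  rcases (hu k).eq_or_lt with h0 | h0
  · simp [← h0, Real.zero_rpow (by linarith : p ≠ 0)]
  calc ∑ j ∈ J, ((2 : ℝ) ^ j) ^ (p - 1) * (if (2 : ℝ) ^ j < u k then u k else 0)
      ≤ (∑ j ∈ J with (2 : ℝ) ^ j ≤ u k, ((2 : ℝ) ^ j) ^ (p - 1)) * u k := by
        rw [Finset.sum_filter, Finset.sum_mul]
        refine Finset.sum_le_sum fun j _ => ?_
        by_cases h : (2 : ℝ) ^ j < u k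
        · rw [if_pos h, if_pos h.le]
        · rw [if_neg h, mul_zero]
          positivity
    _ ≤ (1 - 2 ^ (-(p - 1)))⁻¹ * u k ^ (p - 1) * u k := by
        gcongr
        exact sum_zpow_rpow_le (sub_pos.2 hp) h0 J
    _ = (1 - 2 ^ (-(p - 1)))⁻¹ * u k ^ p := by
        rw [mul_assoc, ← Real.rpow_add_one h0.ne', sub_add_cancel]

lemma sum_zpow_rpow_neg_mul_sum_le_le (hp : 0 < p) (hpq : p < q) (J : Finset ℤ) (s : Finset α)
    {u : α → ℝ} (hu : ∀ k, 0 ≤ u k) :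
    ∑ j ∈ J, ((2 : ℝ) ^ j) ^ (-(q - p)) * ∑ k ∈ s with u k ≤ (2 : ℝ) ^ j, u k ^ q ≤
      (1 - 2 ^ (-(q - p)))⁻¹ * ∑ k ∈ s, u k ^ p := by
  simp_rw [Finset.sum_filter, Finset.mul_sum]
  rw [Finset.sum_comm]
  refine Finset.sum_le_sum fun k _ => ?_
  rcases (hu k).eq_or_lt with h0 | h0
  · simp [← h0, Real.zero_rpow hp.ne', Real.zero_rpow (hp.trans hpq).ne']
  calc ∑ j ∈ J, ((2 : ℝ) ^ j) ^ (-(q - p)) * (if u k ≤ (2 : ℝ) ^ j then u k ^ q else 0)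
      = (∑ j ∈ J with u k ≤ (2 : ℝ) ^ j, ((2 : ℝ) ^ j) ^ (-(q - p))) * u k ^ q := by
        rw [Finset.sum_filter, Finset.sum_mul]
        simp_rw [mul_ite, ite_mul, mul_zero, zero_mul]
    _ ≤ (1 - 2 ^ (-(q - p)))⁻¹ * u k ^ (-(q - p)) * u k ^ q := by
        gcongr
        exact sum_zpow_rpow_neg_le (sub_pos.2 hpq) h0 J
    _ = (1 - 2 ^ (-(q - p)))⁻¹ * u k ^ p := by
        rw [mul_assoc, ← Real.rpow_add h0, neg_sub, sub_add_cancel]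

variable {E F : Type*} [AddCommGroup E] [Module ℂ E] [AddCommGroup F] [Module ℂ F]
  {ν : Seminorm ℂ E} {μ : Seminorm ℂ F} {T : (α → E) → β → F} {s : Finset α} {s' : Finset β}
  {A W : ℝ}

lemma rpow_mul_card_lt_le
    (hT : ∀ f g i, μ (T (f + g) i) ≤ μ (T f i) + μ (T g i))
    (hq : 0 < q)
    (hstrong : ∀ f, ∑ i ∈ s', μ (T f i) ^ q ≤ A * ∑ k ∈ s, ν (f k) ^ q)
    (hweak : ∀ f t, 0 < t → t * #{i ∈ s' | t < μ (T f i)} ≤ W * ∑ k ∈ s, ν (f k))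
    (f : α → E) {t : ℝ} (ht : 0 < t) :
    t ^ p * #{i ∈ s' | t < μ (T f i)} ≤
      2 * W * (t ^ (p - 1) * ∑ k ∈ s with t < ν (f k), ν (f k)) +
        A * 2 ^ q * (t ^ (-(q - p)) * ∑ k ∈ s with ν (f k) ≤ t, ν (f k) ^ q) := by
  classical
  set S := {k | t < ν (f k)} with hS
  set large := S.indicator f with hlarge
  set small := Sᶜ.indicator f with hsmall
  have hsplit : f = large + small := (Set.indicator_self_add_compl S f).symm
  have hsum_large : ∑ k ∈ s, ν (large k) = ∑ k ∈ s with t < ν (f k), ν (f k) := by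
    rw [Finset.sum_filter]
    refine Finset.sum_congr rfl fun k _ => ?_
    by_cases h : t < ν (f k) <;> simp [hlarge, hS, h]
  have hsum_small : ∑ k ∈ s, ν (small k) ^ q = ∑ k ∈ s with ν (f k) ≤ t, ν (f k) ^ q := by
    rw [Finset.sum_filter]
    refine Finset.sum_congr rfl fun k _ => ?_
    by_cases h : ν (f k) ≤ t <;>
      simp [hsmall, hS, h, Real.zero_rpow hq.ne']
  have hcard := (Nat.cast_le (α := ℝ)).2 (card_filter_lt_le_card_filter_half_lt_add (s := s')
    (fun i _ => (congrArg (fun g => μ (T g i)) hsplit).trans_le (hT large small i)) t)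
  have hlarge_le := hweak large (t / 2) (half_pos ht)
  have hsmall_le := (rpow_mul_card_filter_lt_le_sum_rpow s' (fun i => apply_nonneg μ (T small i))
    hq (half_pos ht).le).trans (hstrong small)
  rw [hsum_large] at hlarge_le
  rw [hsum_small] at hsmall_le
  have htp1 : t ^ p = t ^ (p - 1) * t := by rw [← Real.rpow_add_one ht.ne', sub_add_cancel]
  have htpq : t ^ p = t ^ (-(q - p)) * (2 ^ q * (t / 2) ^ q) := by
    rw [← Real.mul_rpow zero_le_two (by positivity), mul_div_cancel₀ _ two_ne_zero,
      ← Real.rpow_add ht, neg_sub, sub_add_cancel]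
  push_cast at hcard
  refine (mul_le_mul_of_nonneg_left hcard (by positivity)).trans ?_
  rw [mul_add]
  refine add_le_add ?_ ?_
  · rw [htp1]
    linarith [mul_le_mul_of_nonneg_left hlarge_le (by positivity : 0 ≤ 2 * t ^ (p - 1))]
  · rw [htpq]
    linarith [mul_le_mul_of_nonneg_left hsmall_le (by positivity : 0 ≤ 2 ^ q * t ^ (-(q - p)))]

theorem sum_rpow_le_of_weak_type_of_strong_type
    (hT : ∀ f g i, μ (T (f + g) i) ≤ μ (T f i) + μ (T g i))
    (hp : 1 < p) (hpq : p < q) (hA : 0 ≤ A) (hW : 0 ≤ W)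
    (hstrong : ∀ f, ∑ i ∈ s', μ (T f i) ^ q ≤ A * ∑ k ∈ s, ν (f k) ^ q)
    (hweak : ∀ f t, 0 < t → t * #{i ∈ s' | t < μ (T f i)} ≤ W * ∑ k ∈ s, ν (f k))
    (f : α → E) :
    ∑ i ∈ s', μ (T f i) ^ p ≤
      2 ^ p * (2 * W * (1 - 2 ^ (-(p - 1)))⁻¹ + A * 2 ^ q * (1 - 2 ^ (-(q - p)))⁻¹) *
        ∑ k ∈ s, ν (f k) ^ p := by
  have hp0 : 0 < p := zero_lt_one.trans hp
  obtain ⟨J, hJ⟩ := exists_sum_rpow_le_sum_zpow_mul_card hp0 s' fun i => apply_nonneg μ (T f i)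
  have hlarge := sum_zpow_rpow_mul_sum_lt_le hp J s fun k => apply_nonneg ν (f k)
  have hsmall := sum_zpow_rpow_neg_mul_sum_le_le hp0 hpq J s fun k => apply_nonneg ν (f k)
  refine hJ.trans ?_
  rw [mul_assoc]
  gcongr
  refine (Finset.sum_le_sum fun j _ => rpow_mul_card_lt_le hT (hp0.trans hpq) hstrong hweak f
    (zpow_pos two_pos j)).trans ?_
  rw [Finset.sum_add_distrib, ← Finset.mul_sum, ← Finset.mul_sum, add_mul, mul_assoc (2 * W),
    mul_assoc (A * 2 ^ q)]
  gcongr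

end Interpolation

section LqNorm

variable {ι : Type*} [Fintype ι] {p q p' q' : ℝ}

/-- The `ℓ^q` norm of a finite family. A bare function of `q : ℝ` is more convenient here than
`PiLp`, whose exponent lives in `ℝ≥0∞`. -/
def lqNorm (q : ℝ) (v : ι → ℂ) : ℝ := (∑ a, ‖v a‖ ^ q) ^ (1 / q)

lemma lqNorm_nonneg (q : ℝ) (v : ι → ℂ) : 0 ≤ lqNorm q v := by
  unfold lqNorm
  positivity

lemma lqNorm_rpow (hq : q ≠ 0) (v : ι → ℂ) : lqNorm q v ^ q = ∑ a, ‖v a‖ ^ q := by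
  rw [lqNorm, ← Real.rpow_mul (by positivity), one_div_mul_cancel hq, Real.rpow_one]

lemma lqNorm_unique [Unique ι] (hq : q ≠ 0) (v : ι → ℂ) : lqNorm q v = ‖v default‖ := by
  rw [lqNorm, Fintype.sum_unique, ← Real.rpow_mul (norm_nonneg _), mul_one_div_cancel hq,
    Real.rpow_one]

lemma lqNorm_smul (hq : q ≠ 0) (c : ℂ) (v : ι → ℂ) : lqNorm q (c • v) = ‖c‖ * lqNorm q v := by
  simp_rw [lqNorm, Pi.smul_apply, norm_smul, Real.mul_rpow (norm_nonneg _) (norm_nonneg _),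
    ← Finset.mul_sum]
  rw [Real.mul_rpow (by positivity) (by positivity), ← Real.rpow_mul (norm_nonneg _),
    mul_one_div_cancel hq, Real.rpow_one]

/-- The `ℓ^q` norm as a seminorm on `ι → ℂ`, for the results on seminorm-valued functions. -/
def lqSeminorm (ι : Type*) [Fintype ι] (hq : 1 ≤ q) : Seminorm ℂ (ι → ℂ) :=
  Seminorm.of (lqNorm q) (fun v w => by
      refine le_trans ?_ (Real.Lp_add_le_of_nonneg Finset.univ hq (fun a _ => norm_nonneg (v a))
        fun a _ => norm_nonneg (w a))
      unfold lqNorm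
      gcongr
      exact norm_add_le _ _)
    (lqNorm_smul (zero_lt_one.trans_le hq).ne')

lemma norm_sum_mul_le_lqNorm_mul_lqNorm (hq : q.HolderConjugate q') (v w : ι → ℂ) :
    ‖∑ a, v a * w a‖ ≤ lqNorm q v * lqNorm q' w := by
  refine (norm_sum_le _ _).trans ?_
  simp_rw [norm_mul]
  exact Real.inner_le_Lp_mul_Lq_of_nonneg Finset.univ hq (fun a _ => norm_nonneg (v a))
    fun a _ => norm_nonneg (w a)

lemma exists_lqNorm_le_one_sum_mul_eq_lqNorm (hq : q.HolderConjugate q') (v : ι → ℂ) :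
    ∃ w : ι → ℂ, lqNorm q' w ≤ 1 ∧ ∑ a, v a * w a = lqNorm q v := by
  obtain ⟨⟨g, hg, hsum⟩, -⟩ := NNReal.isGreatest_Lp Finset.univ (fun a => ‖v a‖₊) hq
  choose u hu huv using fun a => Complex.exists_norm_eq_mul_self (v a)
  refine ⟨fun a => u a * (g a : ℝ), ?_, ?_⟩
  · have hg' : ∑ a, (g a : ℝ) ^ q' ≤ 1 := by exact_mod_cast hg
    simp only [lqNorm, norm_mul, hu, one_mul, Complex.norm_real, NNReal.norm_eq]
    exact Real.rpow_le_one (by positivity) hg' (one_div_nonneg.2 hq.symm.nonneg)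
  · have hsum' := congrArg (fun x : ℝ≥0 => ((x : ℝ) : ℂ)) hsum
    simp only [NNReal.coe_sum, NNReal.coe_mul, NNReal.coe_rpow, coe_nnnorm] at hsum'
    rw [lqNorm, ← hsum', Complex.ofReal_sum]
    refine Finset.sum_congr rfl fun a _ => ?_
    rw [Complex.ofReal_mul, huv]
    ring

lemma sum_mul_kernelOp_eq_sum_kernelOp_mul (N : ℕ) (K : ℕ → ℕ → ℂ) (f g : ℕ → ι → ℂ) :
    ∑ i ∈ Finset.range N, ∑ a, kernelOp N K f i a * g i a =
      ∑ k ∈ Finset.range N, ∑ a, f k a * kernelOp N (fun i k => K k i) g k a := by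
  simp_rw [kernelOp_apply, Finset.sum_apply, Pi.smul_apply, smul_eq_mul, Finset.sum_mul,
    Finset.mul_sum, Finset.sum_comm (s := Finset.univ)]
  rw [Finset.sum_comm]
  exact Finset.sum_congr rfl fun k _ => Finset.sum_congr rfl fun i _ =>
    Finset.sum_congr rfl fun a _ => by ring

lemma sum_sum_mul_le_rpow_mul_rpow (hp : p.HolderConjugate p') (hq : q.HolderConjugate q')
    (s : Finset ℕ) (f g : ℕ → ι → ℂ) :
    ‖∑ k ∈ s, ∑ a, f k a * g k a‖ ≤ (∑ k ∈ s, lqNorm q (f k) ^ p) ^ (1 / p) *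
      (∑ k ∈ s, lqNorm q' (g k) ^ p') ^ (1 / p') :=
  (norm_sum_le _ _).trans <| (Finset.sum_le_sum fun k _ =>
    norm_sum_mul_le_lqNorm_mul_lqNorm hq (f k) (g k)).trans <|
      Real.inner_le_Lp_mul_Lq_of_nonneg s hp (fun k _ => lqNorm_nonneg q (f k))
        fun k _ => lqNorm_nonneg q' (g k)

lemma le_rpow_mul_of_le_rpow_mul_rpow (hp : p.HolderConjugate p') {C X Y : ℝ} (hC : 0 ≤ C)
    (hX : 0 ≤ X) (hY : 0 ≤ Y) (h : X ≤ Y ^ (1 / p) * (C * X) ^ (1 / p')) :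
    X ≤ C ^ (p / p') * Y := by
  rcases hX.eq_or_lt with rfl | hX
  · positivity
  have hsplit : X = X ^ (1 / p) * X ^ (1 / p') := by
    rw [← Real.rpow_add hX, hp.one_div_add_one_div, div_one, Real.rpow_one]
  have hroot : X ^ (1 / p) ≤ Y ^ (1 / p) * C ^ (1 / p') := by
    refine le_of_mul_le_mul_right ?_ (Real.rpow_pos_of_pos hX (1 / p'))
    rwa [← hsplit, mul_assoc, ← Real.mul_rpow hC hX.le]
  have hpow := Real.rpow_le_rpow (by positivity) hroot hp.nonneg
  rwa [Real.mul_rpow (by positivity) (by positivity), ← Real.rpow_mul hX.le, ← Real.rpow_mul hY,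
    ← Real.rpow_mul hC, one_div_mul_cancel hp.ne_zero, Real.rpow_one, Real.rpow_one, mul_comm,
    one_div_mul_eq_div] at hpow

lemma exists_sum_mul_eq_sum_lqNorm_rpow (hp : p.HolderConjugate p') (hq : q.HolderConjugate q')
    {α : Type*} (s : Finset α) (u : α → ι → ℂ) :
    ∃ φ : α → ι → ℂ, ∑ i ∈ s, ∑ a, u i a * φ i a = (∑ i ∈ s, lqNorm q (u i) ^ p : ℝ) ∧
      ∑ i ∈ s, lqNorm q' (φ i) ^ p' ≤ ∑ i ∈ s, lqNorm q (u i) ^ p := by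
  choose w hw huw using fun i => exists_lqNorm_le_one_sum_mul_eq_lqNorm hq (u i)
  have hu : ∀ i, 0 ≤ lqNorm q (u i) := fun i => lqNorm_nonneg q (u i)
  refine ⟨fun i => ((lqNorm q (u i) ^ (p - 1) : ℝ) : ℂ) • w i, ?_,
    Finset.sum_le_sum fun i _ => ?_⟩
  · rw [Complex.ofReal_sum]
    refine Finset.sum_congr rfl fun i _ => ?_
    simp_rw [Pi.smul_apply, smul_eq_mul, mul_left_comm _ (Complex.ofReal _), ← Finset.mul_sum]
    rw [huw, ← Complex.ofReal_mul]
    rcases (hu i).eq_or_lt with h0 | h0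
    · rw [← h0, mul_zero, Real.zero_rpow hp.ne_zero]
    · rw [← Real.rpow_add_one h0.ne', sub_add_cancel]
  · have hnorm : lqNorm q' (((lqNorm q (u i) ^ (p - 1) : ℝ) : ℂ) • w i) ≤
        lqNorm q (u i) ^ (p - 1) := by
      rw [lqNorm_smul hq.symm.ne_zero, Complex.norm_real,
        Real.norm_of_nonneg (Real.rpow_nonneg (hu i) _)]
      exact mul_le_of_le_one_right (Real.rpow_nonneg (hu i) _) (hw i)
    refine (Real.rpow_le_rpow (lqNorm_nonneg q' _) hnorm hp.symm.nonneg).trans_eq ?_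
    rw [← Real.rpow_mul (hu i), hp.sub_one_mul_conj]

theorem sum_lqNorm_kernelOp_rpow_le_of_transpose (hp : p.HolderConjugate p')
    (hq : q.HolderConjugate q') {N : ℕ} {K : ℕ → ℕ → ℂ} {C : ℝ} (hC : 0 ≤ C)
    (h : ∀ g : ℕ → ι → ℂ,
      ∑ i ∈ Finset.range N, lqNorm q' (kernelOp N (fun i k => K k i) g i) ^ p' ≤
        C * ∑ i ∈ Finset.range N, lqNorm q' (g i) ^ p') (f : ℕ → ι → ℂ) :
    ∑ i ∈ Finset.range N, lqNorm q (kernelOp N K f i) ^ p ≤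
      C ^ (p / p') * ∑ i ∈ Finset.range N, lqNorm q (f i) ^ p := by
  obtain ⟨φ, hpairing, hφ⟩ :=
    exists_sum_mul_eq_sum_lqNorm_rpow hp hq (Finset.range N) (kernelOp N K f)
  set X := ∑ i ∈ Finset.range N, lqNorm q (kernelOp N K f i) ^ p
  have hX0 : 0 ≤ X := Finset.sum_nonneg fun i _ => Real.rpow_nonneg (lqNorm_nonneg q _) p
  have hY0 : 0 ≤ ∑ i ∈ Finset.range N, lqNorm q (f i) ^ p :=
    Finset.sum_nonneg fun i _ => Real.rpow_nonneg (lqNorm_nonneg q (f i)) p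
  refine le_rpow_mul_of_le_rpow_mul_rpow hp hC hX0 hY0 ?_
  calc X = ‖∑ k ∈ Finset.range N, ∑ a, f k a * kernelOp N (fun i k => K k i) φ k a‖ := by
        rw [← sum_mul_kernelOp_eq_sum_kernelOp_mul, hpairing, Complex.norm_real,
          Real.norm_of_nonneg hX0]
    _ ≤ _ := sum_sum_mul_le_rpow_mul_rpow hp hq (Finset.range N) _ _
    _ ≤ _ := by
        have := Finset.sum_nonneg fun i (_ : i ∈ Finset.range N) =>
          Real.rpow_nonneg (lqNorm_nonneg q' (kernelOp N (fun i k => K k i) φ i)) p'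
        have := Real.rpow_nonneg hY0 (1 / p)
        have := (h φ).trans (mul_le_mul_of_nonneg_left hφ hC)
        have := hp.symm.nonneg
        gcongr

end LqNorm

section VectorValued

variable {p q p' q' : ℝ}

/-- Uniform boundedness of the discrete Hilbert transforms on `ℓ^p` with values in any finite
dimensional `ℓ^q`. -/
def StrongBound (p q : ℝ) : Prop :=
  ∃ C : ℝ, 0 ≤ C ∧ ∀ (m : ℕ) (ι : Type) [Fintype ι] (f : ℕ → ι → ℂ),
    ∑ i ∈ Finset.range (2 ^ m), lqNorm q (hilbertOp (2 ^ m) f i) ^ p ≤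
      C * ∑ i ∈ Finset.range (2 ^ m), lqNorm q (f i) ^ p

/-- Uniform weak type `(1,1)` of the discrete Hilbert transforms with values in any finite
dimensional `ℓ^q`. -/
def WeakBound (q : ℝ) : Prop :=
  ∃ C : ℝ, 0 ≤ C ∧ ∀ (m : ℕ) (ι : Type) [Fintype ι] (f : ℕ → ι → ℂ) (t : ℝ), 0 < t →
    t * #{i ∈ Finset.range (2 ^ m) | t < lqNorm q (hilbertOp (2 ^ m) f i)} ≤
      C * ∑ i ∈ Finset.range (2 ^ m), lqNorm q (f i)

lemma kernelOp_pi_apply {ι : Type*} (N : ℕ) (K : ℕ → ℕ → ℂ) (f : ℕ → ι → ℂ) (i : ℕ) (a : ι) :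
    kernelOp N K f i a = kernelOp N K (fun k => f k a) i := by
  simp [kernelOp_apply, Finset.sum_apply]

lemma strongBound_two_two : StrongBound 2 2 := by
  refine ⟨1, zero_le_one, fun m ι _ f => le_of_eq ?_⟩
  simp_rw [lqNorm_rpow two_ne_zero, Real.rpow_two, one_mul, Finset.sum_comm (t := Finset.univ),
    hilbertOp, kernelOp_pi_apply]
  exact Finset.sum_congr rfl fun a _ => sum_norm_sq_hilbertOp (by positivity) fun k => f k a

namespace StrongBound

lemma diagonal (hp : p ≠ 0) (hq : q ≠ 0) (h : StrongBound p q) : StrongBound p p := by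
  obtain ⟨C, hC, h⟩ := h
  refine ⟨C, hC, fun m ι _ f => ?_⟩
  simp_rw [lqNorm_rpow hp]
  rw [Finset.sum_comm, Finset.sum_comm (s := Finset.range (2 ^ m)), Finset.mul_sum]
  refine Finset.sum_le_sum fun a _ => ?_
  simpa only [lqNorm_unique hq, hilbertOp, kernelOp_pi_apply] using h m Unit fun k _ => f k a

lemma weakBound (hq : 1 ≤ q) (h : StrongBound q q) : WeakBound q := by
  obtain ⟨C, hC, h⟩ := h
  exact ⟨C * 2 ^ (2 * q - 1) + 4 * (4 * π) + 3, by positivity, fun m ι _ f t ht =>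
    (isHormander_hilbertKernel (2 ^ m)).weak_type (ν := lqSeminorm ι hq) (by positivity) hq hC
      (h m ι) f ht⟩

lemma of_diagonal (hp : 1 < p) (hpq : p ≤ q) (h : StrongBound q q) : StrongBound p q := by
  rcases hpq.eq_or_lt with rfl | hpq
  · exact h
  have hq : 1 ≤ q := (hp.trans hpq).le
  obtain ⟨W, hW, hweak⟩ := h.weakBound hq
  obtain ⟨C, hC, h⟩ := h
  have hinv : ∀ s : ℝ, 0 < s → 0 ≤ (1 - (2 : ℝ) ^ (-s))⁻¹ := fun s hs => inv_nonneg.2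
    (sub_nonneg.2 (Real.rpow_le_one_of_one_le_of_nonpos one_le_two (neg_nonpos.2 hs.le)))
  have hinv_p := hinv (p - 1) (sub_pos.2 hp)
  have hinv_q := hinv (q - p) (sub_pos.2 hpq)
  refine ⟨2 ^ p * (2 * W * (1 - 2 ^ (-(p - 1)))⁻¹ + C * 2 ^ q * (1 - 2 ^ (-(q - p)))⁻¹),
    by positivity, fun m ι _ => ?_⟩
  refine sum_rpow_le_of_weak_type_of_strong_type (ν := lqSeminorm ι hq) (μ := lqSeminorm ι hq)
    (T := hilbertOp (2 ^ m)) (fun f g i => ?_) hp hpq hC hW (h m ι) (hweak m ι)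
  rw [map_add]
  exact map_add_le_add (lqSeminorm ι hq) _ _

end StrongBound

lemma kernelOp_transpose_hilbertKernel {E : Type*} [AddCommGroup E] [Module ℂ E] {N i : ℕ}
    (f : ℕ → E) (hi : i < N) :
    kernelOp N (fun i k => hilbertKernel N (k - i)) f i =
      hilbertOp N (fun k => f (N - 1 - k)) (N - 1 - i) := by
  rw [hilbertOp, kernelOp_apply, kernelOp_apply, ← Finset.sum_range_reflect]
  refine Finset.sum_congr rfl fun k hk => ?_
  have hk := Finset.mem_range.1 hk
  congr 2
  omega

namespace StrongBound

lemma dual (hp : p.HolderConjugate p') (hq : q.HolderConjugate q') (h : StrongBound p' q') :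
    StrongBound p q := by
  obtain ⟨C, hC, h⟩ := h
  refine ⟨C ^ (p / p'), by positivity, fun m ι _ f =>
    sum_lqNorm_kernelOp_rpow_le_of_transpose hp hq hC (fun g => ?_) f⟩
  set N := 2 ^ m
  calc _ = ∑ i ∈ Finset.range N,
        lqNorm q' (hilbertOp N (fun k => g (N - 1 - k)) (N - 1 - i)) ^ p' :=
        Finset.sum_congr rfl fun i hi => by
          rw [kernelOp_transpose_hilbertKernel g (Finset.mem_range.1 hi)]
    _ = ∑ i ∈ Finset.range N, lqNorm q' (hilbertOp N (fun k => g (N - 1 - k)) i) ^ p' :=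
        Finset.sum_range_reflect
          (fun i => lqNorm q' (hilbertOp N (fun k => g (N - 1 - k)) i) ^ p') N
    _ ≤ C * ∑ i ∈ Finset.range N, lqNorm q' (g (N - 1 - i)) ^ p' := h m ι _
    _ = C * ∑ i ∈ Finset.range N, lqNorm q' (g i) ^ p' := by
        rw [Finset.sum_range_reflect fun i => lqNorm q' (g i) ^ p']

lemma of_diagonal_of_conjExponent (hp : 1 < p) (hq : 1 < q) (h : StrongBound q q)
    (h' : StrongBound q.conjExponent q.conjExponent) : StrongBound p q := by
  rcases le_total p q with hpq | hpq
  · exact of_diagonal hp hpq h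
  · have hp' := Real.HolderConjugate.conjExponent hp
    refine dual hp' (Real.HolderConjugate.conjExponent hq) (of_diagonal hp'.symm.lt ?_ h')
    rw [Real.conjExponent, Real.conjExponent, div_le_div_iff₀ (by linarith) (by linarith)]
    linarith

end StrongBound

theorem strongBound (hp : 1 < p) (hq : 1 < q) : StrongBound p q := by
  have hdiag : ∀ r, 1 < r → StrongBound r r := fun r hr => by
    have htwo : (2 : ℝ).conjExponent = 2 := Real.HolderConjugate.two_two.conjExponent_eq
    refine (StrongBound.of_diagonal_of_conjExponent hr one_lt_two strongBound_two_two ?_).diagonal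
      (by linarith) two_ne_zero
    rw [htwo]
    exact strongBound_two_two
  exact .of_diagonal_of_conjExponent hp hq (hdiag q hq)
    (hdiag _ (Real.HolderConjugate.conjExponent hq).symm.lt)

theorem weakBound (hq : 1 < q) : WeakBound q := (strongBound hq hq).weakBound hq.le

end VectorValued

section TrigPoly

variable {ι : Type*} [Fintype ι] {q : ℝ} {N : ℕ}

/-- The symbol of the Hilbert transform on the torus, up to the factor `-i` and the convention at
the zero frequency. -/
def signSymbol (ξ : ℤ) : ℂ := if 0 ≤ ξ then 1 else -1

/-- The trigonometric polynomial with frequencies in `s` and coefficients `c`. -/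
def trigPoly (s : Finset ℤ) (c : ℤ → ℂ) (x : UnitAddCircle) : ℂ := ∑ ξ ∈ s, c ξ * fourier ξ x

lemma trigPoly_smul (s : Finset ℤ) (z : ℂ) (c : ℤ → ℂ) (x : UnitAddCircle) :
    trigPoly s (fun ξ => z * c ξ) x = z * trigPoly s c x := by
  simp_rw [trigPoly, Finset.mul_sum, mul_assoc]

lemma continuous_trigPoly (s : Finset ℤ) (c : ℤ → ℂ) : Continuous (trigPoly s c) := by
  unfold trigPoly
  fun_prop

lemma continuous_lqNorm (hq : 0 ≤ q) : Continuous (lqNorm q : (ι → ℂ) → ℝ) := by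
  refine Continuous.rpow_const (continuous_finsetSum _ fun a _ =>
    (continuous_apply a).norm.rpow_const fun _ => Or.inr hq) fun _ => Or.inr ?_
  positivity

lemma measurable_lqNorm_trigPoly (hq : 0 ≤ q) (s : ι → Finset ℤ) (c : ι → ℤ → ℂ) :
    Measurable fun x => lqNorm q fun a => trigPoly (s a) (c a) x :=
  ((continuous_lqNorm hq).comp (continuous_pi fun a => continuous_trigPoly (s a) (c a))).measurable

lemma lqNorm_congr {v w : ι → ℂ} (h : ∀ a, ‖v a‖ = ‖w a‖) : lqNorm q v = lqNorm q w := by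
  simp_rw [lqNorm, h]

lemma fourier_add_coe (ξ : ℤ) (x : UnitAddCircle) (t : ℝ) :
    fourier ξ (x + (t : UnitAddCircle)) = fourier ξ x * 𝐞 (ξ * t) := by
  have h : fourier ξ (t : UnitAddCircle) = (𝐞 (ξ * t) : ℂ) := by
    rw [fourier_coe_apply, Real.fourierChar_apply]
    push_cast
    ring_nf
  rw [← h, fourier_apply, fourier_apply, fourier_apply, smul_add, AddCircle.toCircle_add,
    Circle.coe_mul]

lemma hilbertOp_fourierChar_natCast {b : ℕ} (hb : b < N) (i : ℕ) :
    hilbertOp N (fun k => (𝐞 (b * ((k : ℝ) / N)) : ℂ)) i = 𝐞 (b * (((i : ℝ) + 1 / 2) / N)) := by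
  have hinner : ∀ z ∈ Finset.range N,
      ∑ k ∈ Finset.range N, (𝐞 (-(z * ((k : ℝ) / N))) * 𝐞 (b * ((k : ℝ) / N)) : ℂ) =
        if b = z then (N : ℂ) else 0 := fun z hz => by
    rw [← sum_fourierChar_natCast_mul hb (Finset.mem_range.1 hz)]
    refine Finset.sum_congr rfl fun k _ => ?_
    rw [← fourierChar_add]
    ring_nf
  rw [hilbertOp_eq_sum_fourierChar, Finset.sum_congr rfl fun z hz => by rw [hinner z hz]]
  have hN : (N : ℂ) ≠ 0 := Nat.cast_ne_zero.2 (by omega)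
  simp only [mul_ite, mul_zero, Finset.sum_ite_eq, Finset.mem_range, hb, if_true]
  field_simp

lemma fourierChar_add_natCast_mul_div (hN : N ≠ 0) (ξ t : ℝ) :
    (𝐞 ((ξ + N) * (t / N)) : ℂ) = 𝐞 (ξ * (t / N)) * 𝐞 t := by
  rw [← fourierChar_add, add_mul, mul_div_cancel₀ _ (Nat.cast_ne_zero.2 hN)]

theorem hilbertOp_fourierChar {ξ : ℤ} (hξ : ξ ∈ Set.Ico (-(N : ℤ)) N) (i : ℕ) :
    hilbertOp N (fun k => (𝐞 (ξ * ((k : ℝ) / N)) : ℂ)) i =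
      signSymbol ξ * 𝐞 (ξ * (((i : ℝ) + 1 / 2) / N)) := by
  obtain ⟨hξ0, hξN⟩ := hξ
  unfold signSymbol
  split_ifs with h
  · lift ξ to ℕ using h
    simpa using hilbertOp_fourierChar_natCast (by exact_mod_cast hξN) i
  · obtain ⟨b, hb⟩ : ∃ b : ℕ, (b : ℤ) = ξ + N := ⟨(ξ + N).toNat, by omega⟩
    have hN : N ≠ 0 := by omega
    have hbξ : (b : ℝ) = ξ + N := by exact_mod_cast hb
    have hgrid : ∀ k : ℕ, (𝐞 (ξ * ((k : ℝ) / N)) : ℂ) = 𝐞 (b * ((k : ℝ) / N)) := fun k => by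
      rw [hbξ, fourierChar_add_natCast_mul_div hN, ← Int.cast_natCast k, fourierChar_intCast,
        mul_one]
    simp_rw [hgrid]
    rw [hilbertOp_fourierChar_natCast (by omega), hbξ, fourierChar_add_natCast_mul_div hN,
      ← Int.cast_natCast i, fourierChar_intCast_add_half]
    ring

lemma hilbertOp_modulated_trigPoly {s : Finset ℤ} {n : ℤ}
    (hs : ∀ ξ ∈ s, ξ - n ∈ Set.Ico (-(N : ℤ)) N) (c : ℤ → ℂ) (x : UnitAddCircle) (i : ℕ) :
    hilbertOp N (fun k => (𝐞 (-(n * ((k : ℝ) / N))) : ℂ) *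
        trigPoly s c (x + (((k : ℝ) / N : ℝ) : UnitAddCircle))) i =
      𝐞 (-(n * (((i : ℝ) + 1 / 2) / N))) * trigPoly s (fun ξ => signSymbol (ξ - n) * c ξ)
        (x + ((((i : ℝ) + 1 / 2) / N : ℝ) : UnitAddCircle)) := by
  have hmod : ∀ (ξ : ℤ) (t : ℝ), (𝐞 (-(n * t)) * 𝐞 (ξ * t) : ℂ) = 𝐞 ((ξ - n : ℤ) * t) :=
    fun ξ t => by
      rw [← fourierChar_add]
      push_cast
      ring_nf
  have hexpand : (fun k : ℕ => (𝐞 (-(n * ((k : ℝ) / N))) : ℂ) *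
      trigPoly s c (x + (((k : ℝ) / N : ℝ) : UnitAddCircle))) =
        ∑ ξ ∈ s, (c ξ * fourier ξ x) • fun k : ℕ => (𝐞 ((ξ - n : ℤ) * ((k : ℝ) / N)) : ℂ) := by
    ext k
    simp_rw [trigPoly, Finset.mul_sum, Finset.sum_apply, Pi.smul_apply, smul_eq_mul,
      fourier_add_coe, ← hmod]
    exact Finset.sum_congr rfl fun ξ _ => by ring
  rw [hexpand, map_sum, Finset.sum_apply, trigPoly, Finset.mul_sum]
  refine Finset.sum_congr rfl fun ξ hξ => ?_
  rw [map_smul, Pi.smul_apply, smul_eq_mul, hilbertOp_fourierChar (hs ξ hξ), fourier_add_coe,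
    ← hmod]
  ring

lemma exists_lqNorm_hilbertOp_eq (q : ℝ) {s : ι → Finset ℤ} {n : ι → ℤ}
    (hs : ∀ a, ∀ ξ ∈ s a, ξ - n a ∈ Set.Ico (-(N : ℤ)) N) (c : ι → ℤ → ℂ) (x : UnitAddCircle) :
    ∃ f : ℕ → ι → ℂ,
      (∀ k : ℕ, lqNorm q (f k) = lqNorm q fun a =>
        trigPoly (s a) (c a) (x + (((k : ℝ) / N : ℝ) : UnitAddCircle))) ∧
      ∀ i : ℕ, lqNorm q (hilbertOp N f i) = lqNorm q fun a =>
        trigPoly (s a) (fun ξ => signSymbol (ξ - n a) * c a ξ)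
          (x + ((((i : ℝ) + 1 / 2) / N : ℝ) : UnitAddCircle)) := by
  refine ⟨fun k a => (𝐞 (-(n a * ((k : ℝ) / N))) : ℂ) *
    trigPoly (s a) (c a) (x + (((k : ℝ) / N : ℝ) : UnitAddCircle)),
    fun k => lqNorm_congr fun a => ?_,
    fun i => lqNorm_congr fun a => ?_⟩
  · rw [norm_mul, Circle.norm_coe, one_mul]
  · rw [hilbertOp, kernelOp_pi_apply, ← hilbertOp, hilbertOp_modulated_trigPoly (hs a), norm_mul,
      Circle.norm_coe, one_mul]

end TrigPoly

section Transference

variable {p q : ℝ}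

lemma exists_sub_mem_Ico_two_pow {ι : Type*} [Finite ι] (s : ι → Finset ℤ) (n : ι → ℤ) :
    ∃ m : ℕ, ∀ a, ∀ ξ ∈ s a, ξ - n a ∈ Set.Ico (-((2 ^ m : ℕ) : ℤ)) (2 ^ m : ℕ) := by
  cases nonempty_fintype ι
  refine ⟨∑ a, ∑ ξ ∈ s a, (ξ - n a).natAbs, fun a ξ hξ => ?_⟩
  have hinner : (ξ - n a).natAbs ≤ ∑ ξ ∈ s a, (ξ - n a).natAbs :=
    Finset.single_le_sum (f := fun ξ => (ξ - n a).natAbs) (fun _ _ => Nat.zero_le _) hξ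
  have houter : ∑ ξ ∈ s a, (ξ - n a).natAbs ≤ ∑ a, ∑ ξ ∈ s a, (ξ - n a).natAbs :=
    Finset.single_le_sum (f := fun a => ∑ ξ ∈ s a, (ξ - n a).natAbs) (fun _ _ => Nat.zero_le _)
      (Finset.mem_univ a)
  have hlt := (hinner.trans houter).trans_lt Nat.lt_two_pow_self
  rw [Set.mem_Ico]
  omega

lemma lintegral_le_of_sum_translates_le {G : Type*} [AddGroup G] [MeasurableSpace G]
    [MeasurableAdd G] {μ : Measure G} [μ.IsAddRightInvariant] {N : ℕ} (hN : N ≠ 0)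
    {F H : G → ℝ≥0∞} (hF : Measurable F) (hH : Measurable H) {u v : ℕ → G} {C : ℝ≥0∞}
    (h : ∀ x, ∑ i ∈ Finset.range N, F (x + u i) ≤ C * ∑ i ∈ Finset.range N, H (x + v i)) :
    ∫⁻ x, F x ∂μ ≤ C * ∫⁻ x, H x ∂μ := by
  have hint := lintegral_mono (μ := μ) h
  rw [lintegral_finsetSum _ fun i _ => by fun_prop, lintegral_const_mul _ (by fun_prop),
    lintegral_finsetSum _ fun i _ => by fun_prop] at hint
  simp_rw [lintegral_add_right_eq_self F, lintegral_add_right_eq_self H] at hint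
  simp only [Finset.sum_const, Finset.card_range, nsmul_eq_mul] at hint
  rw [mul_left_comm] at hint
  exact (ENNReal.mul_le_mul_iff_right (Nat.cast_ne_zero.2 hN) (ENNReal.natCast_ne_top N)).1 hint

theorem exists_lintegral_lqNorm_signSymbol_le (hp : 1 < p) (hq : 1 < q) :
    ∃ C : ℝ, 0 ≤ C ∧ ∀ (ι : Type) [Fintype ι] (s : ι → Finset ℤ) (n : ι → ℤ) (c : ι → ℤ → ℂ),
      ∫⁻ x, ENNReal.ofReal (lqNorm q (fun a =>
          trigPoly (s a) (fun ξ => signSymbol (ξ - n a) * c a ξ) x) ^ p) ∂AddCircle.haarAddCircle ≤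
        ENNReal.ofReal C * ∫⁻ x, ENNReal.ofReal (lqNorm q (fun a => trigPoly (s a) (c a) x) ^ p)
          ∂AddCircle.haarAddCircle := by
  obtain ⟨C, hC, h⟩ := strongBound hp hq
  refine ⟨C, hC, fun ι _ s n c => ?_⟩
  obtain ⟨m, hm⟩ := exists_sub_mem_Ico_two_pow s n
  have hq0 : 0 ≤ q := by linarith
  refine lintegral_le_of_sum_translates_le (N := 2 ^ m)
    (u := fun i => (((i + 1 / 2) / (2 ^ m : ℕ) : ℝ) : UnitAddCircle))
    (v := fun i => ((i / (2 ^ m : ℕ) : ℝ) : UnitAddCircle)) (by positivity)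
    ((measurable_lqNorm_trigPoly hq0 s _).pow_const p).ennreal_ofReal
    ((measurable_lqNorm_trigPoly hq0 s c).pow_const p).ennreal_ofReal fun x => ?_
  obtain ⟨f, hf, hHf⟩ := exists_lqNorm_hilbertOp_eq q hm c x
  have hgrid := h m ι f
  simp_rw [hf, hHf] at hgrid
  rw [← ENNReal.ofReal_sum_of_nonneg fun _ _ => Real.rpow_nonneg (lqNorm_nonneg q _) p,
    ← ENNReal.ofReal_sum_of_nonneg fun _ _ => Real.rpow_nonneg (lqNorm_nonneg q _) p,
    ← ENNReal.ofReal_mul hC]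
  exact ENNReal.ofReal_le_ofReal hgrid

theorem exists_mul_measure_lt_lqNorm_signSymbol_le (hq : 1 < q) :
    ∃ C : ℝ, 0 ≤ C ∧ ∀ (ι : Type) [Fintype ι] (s : ι → Finset ℤ) (n : ι → ℤ) (c : ι → ℤ → ℂ)
      (t : ℝ), 0 < t →
      ENNReal.ofReal t * AddCircle.haarAddCircle {x : UnitAddCircle | t < lqNorm q fun a =>
          trigPoly (s a) (fun ξ => signSymbol (ξ - n a) * c a ξ) x} ≤
        ENNReal.ofReal C * ∫⁻ x, ENNReal.ofReal (lqNorm q fun a => trigPoly (s a) (c a) x)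
          ∂AddCircle.haarAddCircle := by
  obtain ⟨C, hC, h⟩ := weakBound hq
  refine ⟨C, hC, fun ι _ s n c t ht => ?_⟩
  obtain ⟨m, hm⟩ := exists_sub_mem_Ico_two_pow s n
  have hq0 : 0 ≤ q := by linarith
  have hmeas : MeasurableSet {x : UnitAddCircle | t < lqNorm q fun a =>
      trigPoly (s a) (fun ξ => signSymbol (ξ - n a) * c a ξ) x} :=
    measurableSet_lt measurable_const (measurable_lqNorm_trigPoly hq0 s _)
  rw [← lintegral_indicator_const hmeas]
  refine lintegral_le_of_sum_translates_le (N := 2 ^ m)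
    (u := fun i => (((i + 1 / 2) / (2 ^ m : ℕ) : ℝ) : UnitAddCircle))
    (v := fun i => ((i / (2 ^ m : ℕ) : ℝ) : UnitAddCircle)) (by positivity)
    (measurable_const.indicator hmeas)
    (measurable_lqNorm_trigPoly hq0 s c).ennreal_ofReal fun x => ?_
  obtain ⟨f, hf, hHf⟩ := exists_lqNorm_hilbertOp_eq q hm c x
  have hgrid := h m ι f t ht
  simp_rw [hf, hHf] at hgrid
  rw [← ENNReal.ofReal_sum_of_nonneg fun _ _ => lqNorm_nonneg q _, ← ENNReal.ofReal_mul hC]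
  refine le_trans (le_of_eq ?_) (ENNReal.ofReal_le_ofReal hgrid)
  rw [ENNReal.ofReal_mul ht.le, ENNReal.ofReal_natCast, mul_comm, ← nsmul_eq_mul,
    ← Finset.sum_const, Finset.sum_filter]
  rfl

end Transference

section BoundedVariation

variable {ι κ : Type*} {p q V : ℝ}

lemma sum_Ico_intCast_sub {E : Type*} [AddCommGroup E] (f : ℤ → E) {a b : ℤ} (hab : a ≤ b) :
    ∑ n ∈ Finset.Ico a b, (f (n + 1) - f n) = f b - f a := by
  induction b, hab using Int.leInduction with
  | base => simp
  | succ b hab ih =>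
    rw [← Finset.sum_Ico_add_eq_sum_Ico_add_one hab, ih, add_comm, sub_add_sub_cancel]

lemma two_mul_eq_sum_jump_mul_signSymbol {τ : ℤ → ℂ} {a b ξ : ℤ} (ha : τ a = 0) (hb : τ b = 0)
    (hξ : ξ ∈ Finset.Ioc a b) :
    2 * τ ξ = ∑ n ∈ Finset.Ico a b, (τ (n + 1) - τ n) * signSymbol (ξ - (n + 1)) := by
  obtain ⟨haξ, hξb⟩ := Finset.mem_Ioc.1 hξ
  have hleft : ∑ n ∈ Finset.Ico a ξ, (τ (n + 1) - τ n) * signSymbol (ξ - (n + 1)) = τ ξ := by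
    rw [← sub_zero (τ ξ), ← ha, ← sum_Ico_intCast_sub τ haξ.le]
    refine Finset.sum_congr rfl fun n hn => ?_
    rw [signSymbol, if_pos (by have := Finset.mem_Ico.1 hn; omega), mul_one]
  have hright : ∑ n ∈ Finset.Ico ξ b, (τ (n + 1) - τ n) * signSymbol (ξ - (n + 1)) = τ ξ := by
    rw [← sub_zero (τ ξ), ← hb, ← neg_sub, ← sum_Ico_intCast_sub τ hξb, ← Finset.sum_neg_distrib]
    refine Finset.sum_congr rfl fun n hn => ?_
    rw [signSymbol, if_neg (by have := Finset.mem_Ico.1 hn; omega), mul_neg_one]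
  rw [← Finset.Ico_union_Ico_eq_Ico haξ.le hξb,
    Finset.sum_union (Finset.Ico_disjoint_Ico_consecutive a ξ b), hleft, hright, two_mul]

lemma norm_trigPoly_mul_le_sum_norm_jump {τ : ℤ → ℂ} {a b : ℤ} (ha : τ a = 0) (hb : τ b = 0)
    {s : Finset ℤ} (hs : s ⊆ Finset.Ioc a b) (c : ℤ → ℂ) (x : UnitAddCircle) :
    ‖trigPoly s (fun ξ => τ ξ * c ξ) x‖ ≤ ∑ n ∈ Finset.Ico a b, ‖τ (n + 1) - τ n‖ *
      ‖trigPoly s (fun ξ => signSymbol (ξ - (n + 1)) * c ξ) x‖ := by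
  have hsum : 2 * trigPoly s (fun ξ => τ ξ * c ξ) x = ∑ n ∈ Finset.Ico a b,
      (τ (n + 1) - τ n) * trigPoly s (fun ξ => signSymbol (ξ - (n + 1)) * c ξ) x := by
    simp_rw [trigPoly, Finset.mul_sum]
    rw [Finset.sum_comm]
    refine Finset.sum_congr rfl fun ξ hξ => ?_
    simp_rw [← mul_assoc, ← Finset.sum_mul]
    rw [two_mul_eq_sum_jump_mul_signSymbol ha hb (hs hξ)]
  calc ‖trigPoly s (fun ξ => τ ξ * c ξ) x‖ ≤ ‖2 * trigPoly s (fun ξ => τ ξ * c ξ) x‖ := by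
        rw [norm_mul, Complex.norm_ofNat]
        linarith [norm_nonneg (trigPoly s (fun ξ => τ ξ * c ξ) x)]
    _ ≤ _ := by
        rw [hsum]
        simpa only [norm_mul] using norm_sum_le (Finset.Ico a b) fun n =>
          (τ (n + 1) - τ n) * trigPoly s (fun ξ => signSymbol (ξ - (n + 1)) * c ξ) x

/-- Symbols `τ ℓ` vanishing at the endpoints of `[a, b]`, with total variation at most `V` there. -/
structure IsVariationBounded (τ : ι → ℤ → ℂ) (a b : ℤ) (V : ℝ) : Prop where
  left : ∀ ℓ, τ ℓ a = 0
  right : ∀ ℓ, τ ℓ b = 0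
  sum_jump_le : ∀ ℓ, ∑ n ∈ Finset.Ico a b, ‖τ ℓ (n + 1) - τ ℓ n‖ ≤ V

lemma IsVariationBounded.sum_coe_jump_le {τ : ι → ℤ → ℂ} {a b : ℤ}
    (hτ : IsVariationBounded τ a b V) (ℓ : ι) :
    ∑ n : Finset.Ico a b, ‖τ ℓ (n + 1) - τ ℓ n‖ ≤ V := by
  simpa only [Finset.sum_coe_sort (Finset.Ico a b) fun n => ‖τ ℓ (n + 1) - τ ℓ n‖]
    using hτ.sum_jump_le ℓ

/-- The coefficients `c ℓ`, repeated once for each jump of `τ ℓ` in `[a, b]` and weighted by the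
size of that jump to the power `1/q`. -/
def jumpCoeff {a b : ℤ} (q : ℝ) (τ c : ι → ℤ → ℂ) (i : ι × Finset.Ico a b) (ξ : ℤ) : ℂ :=
  ((‖τ i.1 (i.2 + 1) - τ i.1 i.2‖ ^ (1 / q) : ℝ) : ℂ) * c i.1 ξ

variable [Fintype ι] [Fintype κ]

lemma norm_ofReal_rpow_one_div_mul_rpow (hq : q ≠ 0) {w : ℝ} (hw : 0 ≤ w) (z : ℂ) :
    ‖((w ^ (1 / q) : ℝ) : ℂ) * z‖ ^ q = w * ‖z‖ ^ q := by
  rw [norm_mul, Complex.norm_real, Real.norm_of_nonneg (by positivity),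
    Real.mul_rpow (by positivity) (norm_nonneg z), ← Real.rpow_mul hw, one_div_mul_cancel hq,
    Real.rpow_one]

lemma lqNorm_le_rpow_mul_of_rpow_le (hq : 0 < q) (hV : 0 ≤ V) {v : ι → ℂ} {w : κ → ℂ} {r : ℝ}
    (h : ∑ a, ‖v a‖ ^ q ≤ V ^ (r * q) * ∑ a, ‖w a‖ ^ q) : lqNorm q v ≤ V ^ r * lqNorm q w := by
  refine (Real.rpow_le_rpow_iff (lqNorm_nonneg q v)
    (mul_nonneg (by positivity) (lqNorm_nonneg q w)) hq).1 ?_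
  rwa [Real.mul_rpow (by positivity) (lqNorm_nonneg q w), ← Real.rpow_mul hV, lqNorm_rpow hq.ne',
    lqNorm_rpow hq.ne']

lemma lqNorm_le_of_norm_le_sum_mul (hq : 1 ≤ q) {w : ι → κ → ℝ} (hw : ∀ ℓ n, 0 ≤ w ℓ n)
    (hV : 0 ≤ V) (hwV : ∀ ℓ, ∑ n, w ℓ n ≤ V) {u : ι → ℂ} {v : ι → κ → ℂ}
    (huv : ∀ ℓ, ‖u ℓ‖ ≤ ∑ n, w ℓ n * ‖v ℓ n‖) :
    lqNorm q u ≤ V ^ (1 - 1 / q) *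
      lqNorm q fun a : ι × κ => ((w a.1 a.2 ^ (1 / q) : ℝ) : ℂ) * v a.1 a.2 := by
  have hq0 : 0 < q := by linarith
  refine lqNorm_le_rpow_mul_of_rpow_le hq0 hV ?_
  rw [Fintype.sum_prod_type, Finset.mul_sum]
  refine Finset.sum_le_sum fun ℓ _ => ?_
  simp_rw [norm_ofReal_rpow_one_div_mul_rpow hq0.ne' (hw _ _)]
  have hw0 : 0 ≤ ∑ n, w ℓ n := Finset.sum_nonneg fun n _ => hw ℓ n
  have hwv0 : 0 ≤ ∑ n, w ℓ n * ‖v ℓ n‖ ^ q :=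
    Finset.sum_nonneg fun n _ => mul_nonneg (hw ℓ n) (by positivity)
  have hholder := Real.inner_le_weight_mul_Lp_of_nonneg Finset.univ hq (w ℓ)
    (fun n => ‖v ℓ n‖) (hw ℓ) fun n => norm_nonneg (v ℓ n)
  have hexp : 0 ≤ 1 - 1 / q := sub_nonneg.2 ((div_le_one hq0).2 hq)
  calc ‖u ℓ‖ ^ q ≤ ((∑ n, w ℓ n) ^ (1 - q⁻¹) * (∑ n, w ℓ n * ‖v ℓ n‖ ^ q) ^ q⁻¹) ^ q := by
        gcongr
        exact (huv ℓ).trans hholder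
    _ = (∑ n, w ℓ n) ^ ((1 - 1 / q) * q) * ∑ n, w ℓ n * ‖v ℓ n‖ ^ q := by
        rw [Real.mul_rpow (by positivity) (by positivity), ← Real.rpow_mul hw0,
          ← Real.rpow_mul hwv0, inv_mul_cancel₀ hq0.ne', Real.rpow_one, one_div]
    _ ≤ _ := by
        gcongr
        exact hwV ℓ

lemma lqNorm_rpow_mul_le (hq : 0 < q) {w : ι → κ → ℝ} (hw : ∀ ℓ n, 0 ≤ w ℓ n) (hV : 0 ≤ V)
    (hwV : ∀ ℓ, ∑ n, w ℓ n ≤ V) (u : ι → ℂ) :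
    (lqNorm q fun a : ι × κ => ((w a.1 a.2 ^ (1 / q) : ℝ) : ℂ) * u a.1) ≤
      V ^ (1 / q) * lqNorm q u := by
  refine lqNorm_le_rpow_mul_of_rpow_le hq hV ?_
  rw [Fintype.sum_prod_type, Finset.mul_sum, one_div_mul_cancel hq.ne', Real.rpow_one]
  refine Finset.sum_le_sum fun ℓ _ => ?_
  simp_rw [norm_ofReal_rpow_one_div_mul_rpow hq.ne' (hw _ _)]
  rw [← Finset.sum_mul]
  exact mul_le_mul_of_nonneg_right (hwV ℓ) (by positivity)

namespace IsVariationBounded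

variable {τ : ι → ℤ → ℂ} {a b : ℤ}

lemma lqNorm_trigPoly_jumpCoeff_le (hτ : IsVariationBounded τ a b V) (hq : 0 < q) (hV : 0 ≤ V)
    (s : ι → Finset ℤ) (c : ι → ℤ → ℂ) (x : UnitAddCircle) :
    (lqNorm q fun i : ι × Finset.Ico a b => trigPoly (s i.1) (jumpCoeff q τ c i) x) ≤
      V ^ (1 / q) * lqNorm q fun ℓ => trigPoly (s ℓ) (c ℓ) x := by
  unfold jumpCoeff
  simp_rw [trigPoly_smul]
  exact lqNorm_rpow_mul_le hq (w := fun ℓ (n : Finset.Ico a b) => ‖τ ℓ (n + 1) - τ ℓ n‖)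
    (fun _ _ => norm_nonneg _) hV hτ.sum_coe_jump_le fun ℓ => trigPoly (s ℓ) (c ℓ) x

lemma lqNorm_trigPoly_mul_le (hτ : IsVariationBounded τ a b V) (hq : 1 ≤ q) (hV : 0 ≤ V)
    {s : ι → Finset ℤ} (hs : ∀ ℓ, s ℓ ⊆ Finset.Ioc a b) (c : ι → ℤ → ℂ) (x : UnitAddCircle) :
    (lqNorm q fun ℓ => trigPoly (s ℓ) (fun ξ => τ ℓ ξ * c ℓ ξ) x) ≤
      V ^ (1 - 1 / q) * lqNorm q fun i : ι × Finset.Ico a b =>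
        trigPoly (s i.1) (fun ξ => signSymbol (ξ - (i.2 + 1)) * jumpCoeff q τ c i ξ) x := by
  unfold jumpCoeff
  simp_rw [mul_left_comm (signSymbol _), trigPoly_smul]
  refine lqNorm_le_of_norm_le_sum_mul hq
    (w := fun ℓ (n : Finset.Ico a b) => ‖τ ℓ (n + 1) - τ ℓ n‖)
    (v := fun ℓ n => trigPoly (s ℓ) (fun ξ => signSymbol (ξ - (n + 1)) * c ℓ ξ) x)
    (fun _ _ => norm_nonneg _) hV hτ.sum_coe_jump_le fun ℓ => ?_
  rw [Finset.sum_coe_sort (Finset.Ico a b) fun n => ‖τ ℓ (n + 1) - τ ℓ n‖ *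
    ‖trigPoly (s ℓ) (fun ξ => signSymbol (ξ - (n + 1)) * c ℓ ξ) x‖]
  exact norm_trigPoly_mul_le_sum_norm_jump (hτ.left ℓ) (hτ.right ℓ) (hs ℓ) (c ℓ) x

end IsVariationBounded

lemma lintegral_ofReal_rpow_le_of_le_mul {α : Type*} [MeasurableSpace α] {μ : Measure α}
    {f g : α → ℝ} {W : ℝ} (hp : 0 ≤ p) (hW : 0 ≤ W) (hf : ∀ x, 0 ≤ f x) (hg : ∀ x, 0 ≤ g x)
    (h : ∀ x, f x ≤ W * g x) :
    ∫⁻ x, ENNReal.ofReal (f x ^ p) ∂μ ≤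
      ENNReal.ofReal (W ^ p) * ∫⁻ x, ENNReal.ofReal (g x ^ p) ∂μ := by
  rw [← lintegral_const_mul' _ _ ENNReal.ofReal_ne_top]
  refine lintegral_mono fun x => ?_
  rw [← ENNReal.ofReal_mul (by positivity), ← Real.mul_rpow hW (hg x)]
  exact ENNReal.ofReal_le_ofReal (Real.rpow_le_rpow (hf x) (h x) hp)

theorem exists_lintegral_lqNorm_mul_le (hp : 1 < p) (hq : 1 < q) :
    ∃ C : ℝ, 0 ≤ C ∧ ∀ (ι : Type) [Fintype ι] (τ c : ι → ℤ → ℂ) (s : ι → Finset ℤ) (a b : ℤ)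
      (V : ℝ), 0 < V → IsVariationBounded τ a b V → (∀ ℓ, s ℓ ⊆ Finset.Ioc a b) →
      ∫⁻ x, ENNReal.ofReal (lqNorm q (fun ℓ => trigPoly (s ℓ) (fun ξ => τ ℓ ξ * c ℓ ξ) x) ^ p)
          ∂AddCircle.haarAddCircle ≤
        ENNReal.ofReal (C * V ^ p) *
          ∫⁻ x, ENNReal.ofReal (lqNorm q (fun ℓ => trigPoly (s ℓ) (c ℓ) x) ^ p)
            ∂AddCircle.haarAddCircle := by
  obtain ⟨C, hC, h⟩ := exists_lintegral_lqNorm_signSymbol_le hp hq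
  refine ⟨C, hC, fun ι _ τ c s a b V hV hτ hs => ?_⟩
  have hp0 : 0 ≤ p := by linarith
  have hconst : C * V ^ p = (V ^ (1 - 1 / q)) ^ p * (C * (V ^ (1 / q)) ^ p) := by
    rw [mul_left_comm, ← Real.mul_rpow (by positivity) (by positivity), ← Real.rpow_add hV,
      sub_add_cancel, Real.rpow_one]
  rw [hconst, ENNReal.ofReal_mul (by positivity), ENNReal.ofReal_mul hC, mul_assoc, mul_assoc]
  refine (lintegral_ofReal_rpow_le_of_le_mul hp0 (by positivity) (fun _ => lqNorm_nonneg q _)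
    (fun _ => lqNorm_nonneg q _) (hτ.lqNorm_trigPoly_mul_le hq.le hV.le hs c)).trans ?_
  refine mul_le_mul_right ((h (ι × Finset.Ico a b) (fun i => s i.1) (fun i => i.2 + 1)
    (jumpCoeff q τ c)).trans (mul_le_mul_right ?_ _)) _
  exact lintegral_ofReal_rpow_le_of_le_mul hp0 (by positivity) (fun _ => lqNorm_nonneg q _)
    (fun _ => lqNorm_nonneg q _) (hτ.lqNorm_trigPoly_jumpCoeff_le (by linarith) hV.le s c)

theorem exists_mul_measure_lt_lqNorm_mul_le (hq : 1 < q) :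
    ∃ C : ℝ, 0 ≤ C ∧ ∀ (ι : Type) [Fintype ι] (τ c : ι → ℤ → ℂ) (s : ι → Finset ℤ) (a b : ℤ)
      (V : ℝ), 0 < V → IsVariationBounded τ a b V → (∀ ℓ, s ℓ ⊆ Finset.Ioc a b) →
      ∀ t : ℝ, 0 < t →
      ENNReal.ofReal t * AddCircle.haarAddCircle {x : UnitAddCircle |
          t < lqNorm q fun ℓ => trigPoly (s ℓ) (fun ξ => τ ℓ ξ * c ℓ ξ) x} ≤
        ENNReal.ofReal (C * V) * ∫⁻ x, ENNReal.ofReal (lqNorm q fun ℓ => trigPoly (s ℓ) (c ℓ) x)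
            ∂AddCircle.haarAddCircle := by
  obtain ⟨C, hC, h⟩ := exists_mul_measure_lt_lqNorm_signSymbol_le hq
  refine ⟨C, hC, fun ι _ τ c s a b V hV hτ hs t ht => ?_⟩
  have hW : 0 < V ^ (1 - 1 / q) := by positivity
  have hconst : C * V = V ^ (1 - 1 / q) * (C * V ^ (1 / q)) := by
    rw [mul_left_comm, ← Real.rpow_add hV, sub_add_cancel, Real.rpow_one]
  rw [hconst, ENNReal.ofReal_mul hW.le, ENNReal.ofReal_mul hC, mul_assoc, mul_assoc,
    ← mul_div_cancel₀ t hW.ne', ENNReal.ofReal_mul hW.le, mul_assoc]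
  refine mul_le_mul_right ((mul_le_mul_right (measure_mono fun x hx => ?_) _).trans <|
    (h (ι × Finset.Ico a b) (fun i => s i.1) (fun i => i.2 + 1) (jumpCoeff q τ c)
      (t / V ^ (1 - 1 / q))
      (by positivity)).trans (mul_le_mul_right ?_ _)) _
  · rw [Set.mem_ofPred_eq, mul_div_cancel₀ t hW.ne'] at hx
    rw [Set.mem_ofPred_eq, div_lt_iff₀' hW]
    exact hx.trans_le (hτ.lqNorm_trigPoly_mul_le hq.le hV.le hs c x)
  · simpa only [Real.rpow_one] using lintegral_ofReal_rpow_le_of_le_mul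
      (μ := AddCircle.haarAddCircle) zero_le_one (by positivity)
      (fun _ => lqNorm_nonneg q _) (fun _ => lqNorm_nonneg q _)
      (hτ.lqNorm_trigPoly_jumpCoeff_le (by linarith) hV.le s c)

end BoundedVariation

section Marcinkiewicz

variable {σ : ℤ → ℂ} {M : ℝ}

/-- The frequencies `2^{ℓ-4} ≤ |ξ| < 2^ℓ`, which contain the support of `ξ ↦ ψ_ℓ(⟨ξ⟩)`. For `ℓ < 4`
the truncated quotient is zero and the lower bound is void. -/
def dyadicAnnulus (ℓ : ℕ) : Finset ℤ := (Finset.Ioo (-2 ^ ℓ) (2 ^ ℓ)).filter (2 ^ ℓ / 16 ≤ |·|)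

lemma mem_dyadicAnnulus {ℓ : ℕ} {ξ : ℤ} :
    ξ ∈ dyadicAnnulus ℓ ↔ |ξ| < 2 ^ ℓ ∧ 2 ^ ℓ / 16 ≤ |ξ| := by
  rw [dyadicAnnulus, Finset.mem_filter, Finset.mem_Ioo, ← abs_lt]

lemma dyadicAnnulus_subset_Ioo {ℓ L : ℕ} (h : ℓ ≤ L) :
    dyadicAnnulus ℓ ⊆ Finset.Ioo (-2 ^ L) (2 ^ L) := fun ξ hξ => by
  rw [Finset.mem_Ioo, ← abs_lt]
  exact (mem_dyadicAnnulus.1 hξ).1.trans_le (pow_le_pow_right₀ one_le_two h)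

lemma bound_nonneg (hσ : MarcinkiewiczCondition σ M) : 0 ≤ M :=
  (norm_nonneg _).trans (hσ.1 0)

lemma sum_jump_indicator_le (hM : ∀ ξ, ‖σ ξ‖ ≤ M) {A B : Finset ℤ}
    (hB : ∀ n, (n ∈ A ↔ n + 1 ∈ A) ∨ n ∈ B) (T : Finset ℤ) :
    ∑ n ∈ T, ‖(A : Set ℤ).indicator σ (n + 1) - (A : Set ℤ).indicator σ n‖ ≤
      ∑ n ∈ A, ‖σ (n + 1) - σ n‖ + #B * M := by
  have hM0 : 0 ≤ M := (norm_nonneg _).trans (hM 0)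
  have hjump : ∀ n, ‖(A : Set ℤ).indicator σ (n + 1) - (A : Set ℤ).indicator σ n‖ ≤
      (if n ∈ A then ‖σ (n + 1) - σ n‖ else 0) + if n ∈ B then M else 0 := fun n => by
    have hBn := hB n
    have hn := hM n
    have hn' := hM (n + 1)
    have hd := norm_nonneg (σ (n + 1) - σ n)
    simp only [Set.indicator_apply, Finset.mem_coe]
    split_ifs <;> try simp only [sub_zero, zero_sub, norm_neg, norm_zero]
    all_goals first | linarith | tauto
  calc _ ≤ ∑ n ∈ T, ((if n ∈ A then ‖σ (n + 1) - σ n‖ else 0) + if n ∈ B then M else 0) :=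
        Finset.sum_le_sum fun n _ => hjump n
    _ = ∑ n ∈ T ∩ A, ‖σ (n + 1) - σ n‖ + #(T ∩ B) * M := by
        rw [Finset.sum_add_distrib, Finset.sum_ite_mem, Finset.sum_ite_mem, Finset.sum_const,
          nsmul_eq_mul]
    _ ≤ _ := by
        gcongr <;> exact Finset.inter_subset_right

lemma dyadicAnnulus_boundary (ℓ : ℕ) (n : ℤ) :
    (n ∈ dyadicAnnulus ℓ ↔ n + 1 ∈ dyadicAnnulus ℓ) ∨
      n ∈ ({-2 ^ ℓ, -(2 ^ ℓ / 16), 2 ^ ℓ / 16 - 1, 2 ^ ℓ - 1} : Finset ℤ) := by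
  simp only [mem_dyadicAnnulus, Finset.mem_insert, Finset.mem_singleton]
  generalize (2 : ℤ) ^ ℓ = Q
  grind

lemma size_natAbs_mem_Icc {ℓ : ℕ} {ξ : ℤ} (hξ : ξ ∈ dyadicAnnulus ℓ) :
    ξ.natAbs.size ∈ Finset.Icc (ℓ - 3) ℓ := by
  obtain ⟨hlt, hle⟩ := mem_dyadicAnnulus.1 hξ
  rw [Int.abs_eq_natAbs] at hlt hle
  refine Finset.mem_Icc.2 ⟨?_, Nat.size_le.2 (by exact_mod_cast hlt)⟩
  by_contra! hlow
  obtain ⟨k, rfl⟩ : ∃ k, ℓ = k + 4 := ⟨ℓ - 4, by omega⟩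
  have hsize : ξ.natAbs < 2 ^ k := Nat.size_le.1 (by omega)
  rw [pow_add] at hle
  zify at hsize hle
  omega

lemma sum_jump_size_natAbs_eq_le (hσ : MarcinkiewiczCondition σ M) (s : Finset ℤ) (j : ℕ) :
    ∑ n ∈ s with n.natAbs.size = j, ‖σ (n + 1) - σ n‖ ≤ 2 * M := by
  rcases j.eq_zero_or_pos with rfl | hj
  · have hzero : s.filter (fun n => n.natAbs.size = 0) ⊆ {0} := fun n hn => by
      simpa [Nat.size_eq_zero] using (Finset.mem_filter.1 hn).2
    calc _ ≤ ∑ n ∈ {0}, ‖σ (n + 1) - σ n‖ :=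
          Finset.sum_le_sum_of_subset_of_nonneg hzero fun _ _ _ => norm_nonneg _
      _ ≤ ‖σ (0 + 1)‖ + ‖σ 0‖ := by
          rw [Finset.sum_singleton]
          exact norm_sub_le _ _
      _ ≤ 2 * M := by linarith [hσ.1 0, hσ.1 (0 + 1)]
  · refine (Finset.sum_le_sum_of_subset_of_nonneg (fun n hn => ?_) fun _ _ _ => norm_nonneg _).trans
      ((hσ.2 j).trans (by linarith [bound_nonneg hσ]))
    obtain rfl := (Finset.mem_filter.1 hn).2
    have hupper : |n| < 2 ^ n.natAbs.size := by
      rw [Int.abs_eq_natAbs]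
      exact_mod_cast Nat.lt_size_self _
    have hlower : (2 : ℤ) ^ (n.natAbs.size - 1) ≤ |n| := by
      rw [Int.abs_eq_natAbs]
      exact_mod_cast Nat.lt_size.1 (Nat.sub_one_lt hj.ne')
    exact Finset.mem_filter.2 ⟨Finset.mem_Icc.2 (abs_le.1 hupper.le), hlower, hupper⟩

lemma sum_jump_dyadicAnnulus_le (hσ : MarcinkiewiczCondition σ M) (ℓ : ℕ) :
    ∑ n ∈ dyadicAnnulus ℓ, ‖σ (n + 1) - σ n‖ ≤ 8 * M := by
  have hcard : (#(Finset.Icc (ℓ - 3) ℓ) : ℝ) ≤ 4 := by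
    rw [Nat.card_Icc]
    exact_mod_cast (by omega : ℓ + 1 - (ℓ - 3) ≤ 4)
  calc _ = ∑ j ∈ Finset.Icc (ℓ - 3) ℓ, ∑ n ∈ dyadicAnnulus ℓ with n.natAbs.size = j,
          ‖σ (n + 1) - σ n‖ :=
        (Finset.sum_fiberwise_of_maps_to (fun _ => size_natAbs_mem_Icc) _).symm
    _ ≤ ∑ j ∈ Finset.Icc (ℓ - 3) ℓ, 2 * M :=
        Finset.sum_le_sum fun j _ => sum_jump_size_natAbs_eq_le hσ _ j
    _ ≤ 8 * M := by
        rw [Finset.sum_const, nsmul_eq_mul]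
        nlinarith [bound_nonneg hσ]

theorem isVariationBounded_indicator_dyadicAnnulus (hσ : MarcinkiewiczCondition σ M) (L : ℕ) :
    IsVariationBounded (fun ℓ : Fin L => (dyadicAnnulus ℓ : Set ℤ).indicator σ)
      (-2 ^ L) (2 ^ L) (12 * M + 1) where
  left ℓ := Set.indicator_of_notMem (fun h => by
    simpa using Finset.mem_Ioo.1 (dyadicAnnulus_subset_Ioo ℓ.2.le h)) σ
  right ℓ := Set.indicator_of_notMem (fun h => by
    simpa using Finset.mem_Ioo.1 (dyadicAnnulus_subset_Ioo ℓ.2.le h)) σ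
  sum_jump_le ℓ := by
    refine (sum_jump_indicator_le hσ.1 (dyadicAnnulus_boundary ℓ) _).trans ?_
    have hcard : (#({-2 ^ (ℓ : ℕ), -(2 ^ (ℓ : ℕ) / 16), 2 ^ (ℓ : ℕ) / 16 - 1,
        2 ^ (ℓ : ℕ) - 1} : Finset ℤ) : ℝ) ≤ 4 := by exact_mod_cast Finset.card_le_four
    nlinarith [bound_nonneg hσ, sum_jump_dyadicAnnulus_le hσ ℓ]

end Marcinkiewicz

section LittlewoodPaley

variable {η : ℝ → ℝ} {ℓ : ℕ} {ξ : ℤ} {r p q : ℝ}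

lemma two_mul_abs_lt_torusEig (ξ : ℤ) : 2 * |(ξ : ℝ)| < torusEig ξ := by
  refine Real.lt_sqrt_of_sq_lt ?_
  rw [mul_pow, sq_abs]
  nlinarith [mul_nonneg (sub_nonneg.2 (one_le_pow₀ (n := 2) (by linarith [pi_gt_three] : 1 ≤ π)))
    (sq_nonneg (ξ : ℝ))]

lemma torusEig_lt (ξ : ℤ) : torusEig ξ < 8 * (|(ξ : ℝ)| + 1) := by
  have hπ : π ^ 2 < 10 := by nlinarith [pi_lt_d2, pi_pos]
  refine (Real.sqrt_lt' (by positivity)).2 ?_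
  nlinarith [mul_nonneg (sub_nonneg.2 hπ.le) (sq_nonneg (ξ : ℝ)), sq_abs (ξ : ℝ),
    abs_nonneg (ξ : ℝ)]

lemma one_le_torusEig (ξ : ℤ) : 1 ≤ torusEig ξ :=
  Real.one_le_sqrt.2 (by nlinarith [sq_nonneg (π * ξ)])

lemma mem_Icc_of_lpProfile_ne_zero (hη : Function.support η ⊆ Set.Icc (1 / 2) 2) {lam : ℝ}
    (hlam : 1 ≤ lam) (h : lpProfile η ℓ lam ≠ 0) : lam ∈ Set.Icc (2 ^ ℓ / 2) (2 * 2 ^ ℓ) := by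
  unfold lpProfile at h
  split_ifs at h with hℓ
  · subst hℓ
    obtain ⟨j, hj⟩ : ∃ j : {j : ℤ // j ≤ 0}, η ((2 : ℝ) ^ (-(j : ℤ)) * lam) ≠ 0 := by
      contrapose! h
      simp only [h, tsum_zero]
    have hpow : (1 : ℝ) ≤ 2 ^ (-(j : ℤ)) := one_le_zpow₀ one_le_two (neg_nonneg.2 j.2)
    have hle := (hη hj).2
    constructor <;> nlinarith
  · obtain ⟨hl, hu⟩ := hη h
    rw [zpow_neg, zpow_natCast] at hl hu
    rw [le_inv_mul_iff₀ (by positivity)] at hl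
    rw [inv_mul_le_iff₀ (by positivity)] at hu
    constructor <;> linarith

lemma mem_dyadicAnnulus_of_lpProfile_ne_zero (hη : Function.support η ⊆ Set.Icc (1 / 2) 2)
    (h : lpProfile η ℓ (torusEig ξ) ≠ 0) : ξ ∈ dyadicAnnulus ℓ := by
  obtain ⟨hl, hu⟩ := mem_Icc_of_lpProfile_ne_zero hη (one_le_torusEig ξ) h
  have hupper : ((|ξ| : ℤ) : ℝ) < ((2 ^ ℓ : ℤ) : ℝ) := by
    push_cast
    linarith [two_mul_abs_lt_torusEig ξ]
  have hlower : ((2 ^ ℓ : ℤ) : ℝ) < ((16 * (|ξ| + 1) : ℤ) : ℝ) := by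
    push_cast
    linarith [torusEig_lt ξ]
  rw [Int.cast_lt] at hupper hlower
  exact mem_dyadicAnnulus.2 ⟨hupper, by omega⟩

/-- The Fourier coefficients of `2^{ℓr} ψ_ℓ(B) f`. -/
def tlCoeff (η : ℝ → ℝ) (r : ℝ) (f : UnitAddCircle → ℂ) (ℓ : ℕ) (ξ : ℤ) : ℂ :=
  (((2 : ℝ) ^ ((ℓ : ℝ) * r) : ℝ) : ℂ) * ((lpProfile η ℓ (torusEig ξ) : ℂ) * fourierCoeff f ξ)

lemma trigPoly_tlCoeff (hη : Function.support η ⊆ Set.Icc (1 / 2) 2) (f : UnitAddCircle → ℂ)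
    (x : UnitAddCircle) :
    trigPoly (dyadicAnnulus ℓ) (tlCoeff η r f ℓ) x =
      (((2 : ℝ) ^ ((ℓ : ℝ) * r) : ℝ) : ℂ) * torusLP η ℓ f x := by
  have hLP : torusLP η ℓ f x =
      trigPoly (dyadicAnnulus ℓ) (fun ξ => (lpProfile η ℓ (torusEig ξ) : ℂ) * fourierCoeff f ξ) x :=
    tsum_eq_sum fun ξ hξ => by
      simp [not_imp_comm.1 (mem_dyadicAnnulus_of_lpProfile_ne_zero hη) hξ]
  rw [hLP, ← trigPoly_smul]
  rfl

/-- The partial sums `(∑_{ℓ<L} 2^{ℓrq} |ψ_ℓ(B) f|^q)^{1/q}` of `torusTlFn η r q f`. -/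
def truncTlFn (η : ℝ → ℝ) (r q : ℝ) (f : UnitAddCircle → ℂ) (L : ℕ) (x : UnitAddCircle) : ℝ :=
  lqNorm q fun ℓ : Fin L => trigPoly (dyadicAnnulus ℓ) (tlCoeff η r f ℓ) x

lemma truncTlFn_nonneg (f : UnitAddCircle → ℂ) (L : ℕ) (x : UnitAddCircle) :
    0 ≤ truncTlFn η r q f L x := lqNorm_nonneg _ _

lemma ofReal_truncTlFn (hη : Function.support η ⊆ Set.Icc (1 / 2) 2) (hq : 0 < q)
    (f : UnitAddCircle → ℂ) (L : ℕ) (x : UnitAddCircle) :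
    ENNReal.ofReal (truncTlFn η r q f L x) =
      (∑ ℓ ∈ Finset.range L,
        (ENNReal.ofReal ((2 : ℝ) ^ ((ℓ : ℝ) * r)) * (‖torusLP η ℓ f x‖₊ : ℝ≥0∞)) ^ q) ^
          (1 / q) := by
  rw [truncTlFn, lqNorm, ← ENNReal.ofReal_rpow_of_nonneg (by positivity) (by positivity),
    ENNReal.ofReal_sum_of_nonneg fun _ _ => by positivity,
    ← Fin.sum_univ_eq_sum_range fun ℓ =>
      (ENNReal.ofReal ((2 : ℝ) ^ ((ℓ : ℝ) * r)) * (‖torusLP η ℓ f x‖₊ : ℝ≥0∞)) ^ q]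
  congr 1
  refine Finset.sum_congr rfl fun ℓ _ => ?_
  rw [trigPoly_tlCoeff hη, norm_mul, Complex.norm_real, Real.norm_of_nonneg (by positivity),
    ← ENNReal.ofReal_rpow_of_nonneg (by positivity) hq.le, ENNReal.ofReal_mul (by positivity),
    ofReal_norm]
  rfl

lemma monotone_truncTlFn (hη : Function.support η ⊆ Set.Icc (1 / 2) 2) (hq : 0 < q)
    (f : UnitAddCircle → ℂ) (x : UnitAddCircle) : Monotone fun L => truncTlFn η r q f L x := by
  intro L L' h
  rw [← ENNReal.ofReal_le_ofReal_iff (truncTlFn_nonneg f L' x), ofReal_truncTlFn hη hq,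
    ofReal_truncTlFn hη hq]
  gcongr

lemma torusTlFn_eq_iSup (hη : Function.support η ⊆ Set.Icc (1 / 2) 2) (hq : 0 < q)
    (f : UnitAddCircle → ℂ) (x : UnitAddCircle) :
    torusTlFn η r q f x = ⨆ L, ENNReal.ofReal (truncTlFn η r q f L x) := by
  simp_rw [ofReal_truncTlFn hη hq]
  rw [torusTlFn, ENNReal.tsum_eq_iSup_nat]
  exact (ENNReal.orderIsoRpow (1 / q) (by positivity)).map_iSup _

lemma lintegral_torusTlFn_rpow (hη : Function.support η ⊆ Set.Icc (1 / 2) 2) (hp : 0 < p)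
    (hq : 0 < q) (f : UnitAddCircle → ℂ) :
    ∫⁻ x, torusTlFn η r q f x ^ p ∂AddCircle.haarAddCircle =
      ⨆ L, ∫⁻ x, ENNReal.ofReal (truncTlFn η r q f L x ^ p) ∂AddCircle.haarAddCircle := by
  have hsup : ∀ x, torusTlFn η r q f x ^ p = ⨆ L, ENNReal.ofReal (truncTlFn η r q f L x ^ p) :=
    fun x => by
      rw [torusTlFn_eq_iSup hη hq]
      refine ((ENNReal.orderIsoRpow p hp).map_iSup _).trans (iSup_congr fun L => ?_)
      exact ENNReal.ofReal_rpow_of_nonneg (truncTlFn_nonneg f L x) hp.le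
  simp_rw [hsup]
  refine lintegral_iSup (fun L => ?_) fun L L' h x => ENNReal.ofReal_le_ofReal ?_
  · exact ((measurable_lqNorm_trigPoly hq.le _ _).pow_const p).ennreal_ofReal
  · exact Real.rpow_le_rpow (truncTlFn_nonneg f L x) (monotone_truncTlFn hη hq f x h) hp.le

lemma haarAddCircle_lt_torusTlFn (hη : Function.support η ⊆ Set.Icc (1 / 2) 2) (hq : 0 < q)
    (f : UnitAddCircle → ℂ) (t : ℝ≥0) :
    AddCircle.haarAddCircle {x | (t : ℝ≥0∞) < torusTlFn η r q f x} =
      ⨆ L, AddCircle.haarAddCircle {x | (t : ℝ) < truncTlFn η r q f L x} := by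
  have hunion : {x | (t : ℝ≥0∞) < torusTlFn η r q f x} =
      ⋃ L, {x | (t : ℝ) < truncTlFn η r q f L x} := by
    ext x
    rw [Set.mem_ofPred_eq, torusTlFn_eq_iSup hη hq, lt_iSup_iff, Set.mem_iUnion]
    refine exists_congr fun L => ?_
    rw [← ENNReal.ofReal_coe_nnreal, ENNReal.ofReal_lt_ofReal_iff_of_nonneg t.coe_nonneg]
    rfl
  rw [hunion]
  exact Monotone.measure_iUnion fun L L' h x hx =>
    lt_of_lt_of_le hx (monotone_truncTlFn hη hq f x h)

end LittlewoodPaley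

section Multiplier

variable {η : ℝ → ℝ} {σ : ℤ → ℂ} {M r p q : ℝ} {f : UnitAddCircle → ℂ}

lemma norm_fourier (n : ℤ) (x : UnitAddCircle) : ‖(fourier n x : ℂ)‖ = 1 := by
  rw [fourier_apply, Circle.norm_coe]

lemma torusMul_of_not_summable (hs : ¬Summable fun ξ => σ ξ * fourierCoeff f ξ) :
    torusMul σ f = 0 := by
  ext x
  refine tsum_eq_zero_of_not_summable fun h => hs (Summable.of_norm ?_)
  simpa only [norm_mul, norm_fourier, mul_one] using h.norm

lemma fourierCoeff_const_mul_fourier (z : ℂ) (ξ n : ℤ) :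
    fourierCoeff (fun x : UnitAddCircle => z * fourier ξ x) n = if ξ = n then z else 0 := by
  rw [fourierCoeff.const_mul, fourierCoeff_fourier (T := 1), Pi.single_apply, mul_ite, mul_one,
    mul_zero]
  exact if_congr eq_comm rfl rfl

lemma fourierCoeff_torusMul (hs : Summable fun ξ => σ ξ * fourierCoeff f ξ) (n : ℤ) :
    fourierCoeff (torusMul σ f) n = σ n * fourierCoeff f n := by
  have hint : ∀ ξ : ℤ, Integrable (fun x : UnitAddCircle =>
      fourier (-n) x • (σ ξ * fourierCoeff f ξ * fourier ξ x)) AddCircle.haarAddCircle := fun ξ =>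
    Continuous.integrable_of_hasCompactSupport (by fun_prop) (HasCompactSupport.of_compactSpace _)
  have hsum := hasSum_integral_of_summable_integral_norm hint (by
    simpa only [norm_smul, norm_mul, norm_fourier, one_mul, mul_one, integral_const,
      probReal_univ, one_smul] using hs.norm)
  simp_rw [smul_eq_mul, tsum_mul_left] at hsum
  refine hsum.unique ?_
  refine (hasSum_ite_eq n (σ n * fourierCoeff f n)).congr_fun fun ξ => ?_
  refine (fourierCoeff_const_mul_fourier _ ξ n).trans ?_
  split_ifs with h <;> simp [h]

lemma truncTlFn_torusMul_le (hq : 0 < q) (σ : ℤ → ℂ) (f : UnitAddCircle → ℂ) (L : ℕ)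
    (x : UnitAddCircle) :
    truncTlFn η r q (torusMul σ f) L x ≤ lqNorm q fun ℓ : Fin L => trigPoly (dyadicAnnulus ℓ)
      (fun ξ => (dyadicAnnulus ℓ : Set ℤ).indicator σ ξ * tlCoeff η r f ℓ ξ) x := by
  by_cases hs : Summable fun ξ => σ ξ * fourierCoeff f ξ
  · refine le_of_eq (congrArg (lqNorm q) (funext fun ℓ => Finset.sum_congr rfl fun ξ hξ => ?_))
    simp only [tlCoeff]
    rw [fourierCoeff_torusMul hs, Set.indicator_of_mem (Finset.mem_coe.2 hξ)]
    ring
  · have hzero : truncTlFn η r q (torusMul σ f) L x = 0 := by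
      simp [torusMul_of_not_summable hs, truncTlFn, tlCoeff, trigPoly, fourierCoeff, lqNorm, hq.ne']
    exact hzero.trans_le (lqNorm_nonneg _ _)

theorem exists_torusTlNorm_torusMul_le (hη : Function.support η ⊆ Set.Icc (1 / 2) 2)
    (hσ : MarcinkiewiczCondition σ M) (r : ℝ) (hp : 1 < p) (hq : 1 < q) :
    ∃ C : ℝ, 0 < C ∧ ∀ f : UnitAddCircle → ℂ,
      torusTlNorm η r p q (torusMul σ f) ≤ ENNReal.ofReal C * torusTlNorm η r p q f := by
  obtain ⟨C, hC, h⟩ := exists_lintegral_lqNorm_mul_le hp hq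
  have hM := bound_nonneg hσ
  have hp0 : 0 < p := by linarith
  have hq0 : 0 < q := by linarith
  refine ⟨((C + 1) * (12 * M + 1) ^ p) ^ (1 / p), by positivity, fun f => ?_⟩
  rw [torusTlNorm, torusTlNorm, ← ENNReal.ofReal_rpow_of_nonneg (by positivity) (by positivity),
    ← ENNReal.mul_rpow_of_nonneg _ _ (by positivity), lintegral_torusTlFn_rpow hη hp0 hq0,
    lintegral_torusTlFn_rpow hη hp0 hq0, ENNReal.mul_iSup]
  refine ENNReal.rpow_le_rpow (iSup_mono fun L => ?_) (by positivity)
  calc _ ≤ ∫⁻ x, ENNReal.ofReal ((lqNorm q fun ℓ : Fin L => trigPoly (dyadicAnnulus ℓ) (fun ξ =>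
          (dyadicAnnulus ℓ : Set ℤ).indicator σ ξ * tlCoeff η r f ℓ ξ) x) ^ p)
          ∂AddCircle.haarAddCircle :=
        lintegral_mono fun x => ENNReal.ofReal_le_ofReal <| Real.rpow_le_rpow
          (truncTlFn_nonneg _ L x) (truncTlFn_torusMul_le hq0 σ f L x) hp0.le
    _ ≤ ENNReal.ofReal (C * (12 * M + 1) ^ p) *
          ∫⁻ x, ENNReal.ofReal (truncTlFn η r q f L x ^ p) ∂AddCircle.haarAddCircle :=
        h (Fin L) _ _ _ _ _ _ (by positivity) (isVariationBounded_indicator_dyadicAnnulus hσ L)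
          fun ℓ => (dyadicAnnulus_subset_Ioo ℓ.2.le).trans Finset.Ioo_subset_Ioc_self
    _ ≤ _ := by gcongr; linarith

theorem exists_torusWeakTlNorm_torusMul_le (hη : Function.support η ⊆ Set.Icc (1 / 2) 2)
    (hσ : MarcinkiewiczCondition σ M) (r : ℝ) (hq : 1 < q) :
    ∃ C : ℝ, 0 < C ∧ ∀ f : UnitAddCircle → ℂ,
      torusWeakTlNorm η r q (torusMul σ f) ≤ ENNReal.ofReal C * torusTlNorm η r 1 q f := by
  obtain ⟨C, hC, h⟩ := exists_mul_measure_lt_lqNorm_mul_le hq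
  have hM := bound_nonneg hσ
  have hq0 : 0 < q := by linarith
  refine ⟨(C + 1) * (12 * M + 1), by positivity, fun f => iSup_le fun t => ?_⟩
  rcases eq_or_ne t 0 with rfl | ht
  · simp
  have ht0 : 0 < (t : ℝ) := NNReal.coe_pos.2 (pos_iff_ne_zero.2 ht)
  rw [torusTlNorm, lintegral_torusTlFn_rpow hη one_pos hq0, div_one, ENNReal.rpow_one,
    haarAddCircle_lt_torusTlFn hη hq0, ENNReal.mul_iSup, ENNReal.mul_iSup]
  refine iSup_mono fun L => ?_
  simp_rw [Real.rpow_one]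
  calc _ ≤ ENNReal.ofReal t * AddCircle.haarAddCircle {x | (t : ℝ) < lqNorm q fun ℓ : Fin L =>
          trigPoly (dyadicAnnulus ℓ)
            (fun ξ => (dyadicAnnulus ℓ : Set ℤ).indicator σ ξ * tlCoeff η r f ℓ ξ) x} := by
        rw [ENNReal.ofReal_coe_nnreal]
        gcongr with x
        exact truncTlFn_torusMul_le hq0 σ f L x
    _ ≤ ENNReal.ofReal (C * (12 * M + 1)) *
          ∫⁻ x, ENNReal.ofReal (truncTlFn η r q f L x) ∂AddCircle.haarAddCircle :=
        h (Fin L) _ _ _ _ _ _ (by positivity) (isVariationBounded_indicator_dyadicAnnulus hσ L)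
          (fun ℓ => (dyadicAnnulus_subset_Ioo ℓ.2.le).trans Finset.Ioo_subset_Ioc_self) t ht0
    _ ≤ _ := by gcongr; linarith

end Multiplier

end MarcinkiewiczTorus

theorem marcinkiewicz_triebel_lizorkin_torus_general
    (η : ℝ → ℝ) (hη : Function.support η ⊆ Set.Icc (1 / 2) 2)
    (σ : ℤ → ℂ) (M : ℝ) (hσ : MarcinkiewiczCondition σ M) :
    (∀ r p q : ℝ, 1 < p → 1 < q → ∃ C : ℝ, 0 < C ∧ ∀ f : UnitAddCircle → ℂ,
        torusTlNorm η r p q (torusMul σ f) ≤ ENNReal.ofReal C * torusTlNorm η r p q f) ∧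
    (∀ r q : ℝ, 1 < q → ∃ C : ℝ, 0 < C ∧ ∀ f : UnitAddCircle → ℂ,
        torusWeakTlNorm η r q (torusMul σ f) ≤
          ENNReal.ofReal C * torusTlNorm η r 1 q f) :=
  ⟨fun r _ _ hp hq => MarcinkiewiczTorus.exists_torusTlNorm_torusMul_le hη hσ r hp hq,
    fun r _ hq => MarcinkiewiczTorus.exists_torusWeakTlNorm_torusMul_le hη hσ r hq⟩

/-- **Marcinkiewicz multipliers on Triebel–Lizorkin spaces of the torus.**
If `σ : ℤ → ℂ` satisfies the classical Marcinkiewicz condition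
`sup_ξ |σ(ξ)| + sup_j Σ_{2^{j-1} ≤ |ξ| < 2^j} |σ(ξ+1) − σ(ξ)| < ∞`, then the Fourier
multiplier `A f(x) = Σ_ξ e^{2πixξ} σ(ξ) f̂(ξ)` extends to a bounded operator on
`F^r_{p,q}(𝕋)` for all `1 < p, q < ∞` and `r ∈ ℝ`, and for `p = 1` it extends to a
bounded operator from `F^r_{1,q}(𝕋)` into `weak-F^r_{1,q}(𝕋)`. -/
theorem marcinkiewicz_triebel_lizorkin_torus
    (η : ℝ → ℝ) (hη : IsAdmissibleEta η)
    (σ : ℤ → ℂ) (M : ℝ) (hσ : MarcinkiewiczCondition σ M) :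
    (∀ r p q : ℝ, 1 < p → 1 < q → ∃ C : ℝ, 0 < C ∧ ∀ f : UnitAddCircle → ℂ,
        torusTlNorm η r p q (torusMul σ f) ≤ ENNReal.ofReal C * torusTlNorm η r p q f) ∧
    (∀ r q : ℝ, 1 < q → ∃ C : ℝ, 0 < C ∧ ∀ f : UnitAddCircle → ℂ,
        torusWeakTlNorm η r q (torusMul σ f) ≤
          ENNReal.ofReal C * torusTlNorm η r 1 q f) :=
  marcinkiewicz_triebel_lizorkin_torus_general η hη.support_subset σ M hσ
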